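/- Under the hypotheses of the parameterized double character sum theorem, for any η with 0 < η ≤ 1, the bound Σ_{y∈T} |Σ_{s∈S} χ_a(s+y)χ_b(s+A(y))| < η·|T|·|S| holds whenever |T| ≥ (2r)⁴·q^{1/r} and |S| ≥ 4r·q^{1/2}/η^{2r}. -/

import Mathlib

open Finset

/-!
Inserting unimodular weights and applying Hölder's inequality over `S` bounds the `2r`-th power of
the double sum by a sum over `2r`-tuples from `T` of complete character sums. A tuple with an entry
that is neither another entry nor the image under `A` of another entry leaves a linear factor with a
nontrivial character, so Weil's bound saves `√q`; all other tuples are determined by at most `r` of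
their entries together with the pattern of coincidences, so there are few of them.

Weil's bound is proved elementarily. The function `g ↦ ∏ χ (g z) ^ e z` on monic polynomials has an
`L`-series which is a polynomial of degree less than the number `N` of points `z`, because the monic
polynomials of a given degree `≥ N` take all tuples of values equally often. Up to sign, the power
sums of its inverse roots are the character sums over the extensions of `F`. Over the extension of
degree `2k` Stepanov's method bounds them by `O(q ^ k)`, and this forces every inverse root to have
size at most `√q`.
-/

section Kummer

open Polynomial

-- The norm `w` of a root of a factor of degree `m` satisfies `w ^ n = c ^ m`.
lemma irreducible_X_pow_sub_C_of_forall_pow_eq_pow {K : Type*} [Field K] {n : ℕ} (hn : n ≠ 0)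
    {c : K} (hc : ∀ (m : ℕ) (w : K), w ^ n = c ^ m → n ∣ m) :
    Irreducible (X ^ n - C c : K[X]) := by
  have hmonic : (X ^ n - C c).Monic := monic_X_pow_sub_C c hn
  have hnotUnit : ¬ IsUnit (X ^ n - C c) := fun h => hn <| by
    rw [← natDegree_X_pow_sub_C (n := n) (r := c), natDegree_eq_zero_of_isUnit h]
  obtain ⟨p, hp, hdvd⟩ := WfDvdMonoid.exists_irreducible_factor hnotUnit hmonic.ne_zero
  have : Fact (Irreducible p) := ⟨hp⟩
  have : Module.Finite K (AdjoinRoot p) := (AdjoinRoot.powerBasis hp.ne_zero).finite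
  have hroot : AdjoinRoot.root p ^ n = algebraMap K (AdjoinRoot p) c := by
    obtain ⟨s, hs⟩ := hdvd
    have h := congrArg (AdjoinRoot.mk p) hs
    rwa [map_mul, AdjoinRoot.mk_self, zero_mul, map_sub, map_pow, AdjoinRoot.mk_X,
      AdjoinRoot.mk_C, sub_eq_zero] at h
  have hnorm : Algebra.norm K (AdjoinRoot.root p) ^ n = c ^ p.natDegree := by
    rw [← map_pow, hroot, Algebra.norm_algebraMap, (AdjoinRoot.powerBasis hp.ne_zero).finrank,
      AdjoinRoot.powerBasis_dim]
  have hle : (X ^ n - C c).natDegree ≤ p.natDegree := by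
    rw [natDegree_X_pow_sub_C]
    exact Nat.le_of_dvd hp.natDegree_pos (hc _ _ hnorm)
  exact (associated_of_dvd_of_natDegree_le hdvd hmonic.ne_zero hle).irreducible hp

/-- For `n ≠ 0`: `n` and the multiplicities of the roots of `f` in `K` have no common factor,
expressed as a cancellation property; equivalently, `f` is not a `d`-th power up to a rootless
factor for any `d ∣ n`, `d ≠ 1`. -/
def RootMultiplicitiesCoprime {K : Type*} [Field K] (n : ℕ) (f : K[X]) : Prop :=
  ∀ m : ℕ, (∀ z, n ∣ m * f.rootMultiplicity z) → n ∣ m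

variable {K : Type*} [Field K]

lemma rootMultiplicity_pow_eq_mul (g : K[X]) (k : ℕ) (z : K) :
    (g ^ k).rootMultiplicity z = k * g.rootMultiplicity z := by
  classical
  rw [← count_roots, roots_pow, Multiset.count_nsmul, count_roots]

lemma RootMultiplicitiesCoprime.dvd_of_pow_mul_pow_eq {n m : ℕ} {f u v : K[X]} {b : K}
    (hf : RootMultiplicitiesCoprime n f) (hf0 : f ≠ 0) (hu : u ≠ 0) (hv : v ≠ 0) (hb : b ≠ 0)
    (h : u ^ n * f ^ m = C b * v ^ n) : n ∣ m := by
  refine hf m fun z => ?_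
  have hmul := congrArg (rootMultiplicity z) h
  rw [rootMultiplicity_mul (mul_ne_zero (pow_ne_zero _ hu) (pow_ne_zero _ hf0)),
    rootMultiplicity_mul (mul_ne_zero (C_ne_zero.2 hb) (pow_ne_zero _ hv)), rootMultiplicity_C,
    zero_add, rootMultiplicity_pow_eq_mul, rootMultiplicity_pow_eq_mul,
    rootMultiplicity_pow_eq_mul] at hmul
  exact (Nat.dvd_add_right (dvd_mul_right n _)).1 ⟨_, hmul⟩

variable {n : ℕ} {a : K} {f : K[X]}

lemma RootMultiplicitiesCoprime.irreducible_X_pow_sub_C_div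
    (hf : RootMultiplicitiesCoprime n f) (hf0 : f ≠ 0) (hn : n ≠ 0) (ha : a ≠ 0) :
    Irreducible (X ^ n - C (algebraMap K[X] (FractionRing K[X]) (C a) /
      algebraMap K[X] (FractionRing K[X]) f)) := by
  set φ := algebraMap K[X] (FractionRing K[X])
  have hφ : Function.Injective φ := IsFractionRing.injective _ _
  have hφf : φ f ≠ 0 := (map_ne_zero_iff φ hφ).2 hf0
  have hφa : φ (C a) ≠ 0 := (map_ne_zero_iff φ hφ).2 (C_ne_zero.2 ha)
  refine irreducible_X_pow_sub_C_of_forall_pow_eq_pow hn fun m w hw => ?_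
  obtain ⟨u, v, hv, rfl⟩ := IsFractionRing.div_surjective (A := K[X]) w
  have hv0 : v ≠ 0 := nonZeroDivisors.ne_zero hv
  have hφv : φ v ≠ 0 := (map_ne_zero_iff φ hφ).2 hv0
  have hu0 : u ≠ 0 := by
    rintro rfl
    rw [map_zero, zero_div, zero_pow hn] at hw
    exact pow_ne_zero m (div_ne_zero hφa hφf) hw.symm
  refine hf.dvd_of_pow_mul_pow_eq hf0 hu0 hv0 (pow_ne_zero m ha) (hφ ?_)
  rw [div_pow, div_pow, div_eq_div_iff (pow_ne_zero _ hφv) (pow_ne_zero _ hφf)] at hw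
  simpa only [map_mul, map_pow] using hw

lemma natDegree_det_le_card_mul {R ι : Type*} [CommRing R] [Fintype ι] [DecidableEq ι]
    (A : Matrix ι ι R[X]) {B : ℕ} (hA : ∀ i j, (A i j).natDegree ≤ B) :
    A.det.natDegree ≤ Fintype.card ι * B := by
  rw [Matrix.det_apply]
  refine natDegree_sum_le_of_forall_le _ _ fun σ _ => (natDegree_smul_le _ _).trans ?_
  refine (natDegree_prod_le _ _).trans ((sum_le_card_nsmul _ _ B fun i _ => hA _ _).trans ?_)
  rw [card_univ, smul_eq_mul]

lemma natDegree_resultant_le {R : Type*} [CommRing R] (g h : R[X][X]) (k l : ℕ) {B : ℕ}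
    (hg : ∀ i, (g.coeff i).natDegree ≤ B) (hh : ∀ i, (h.coeff i).natDegree ≤ B) :
    (resultant g h k l).natDegree ≤ (k + l) * B := by
  refine (natDegree_det_le_card_mul _ (B := B) fun i j => ?_).trans (by rw [Fintype.card_fin])
  rw [sylvester, Matrix.of_apply]
  induction j using Fin.addCases with
  | left j => rw [Fin.addCases_left]; split_ifs <;> simp [hh]
  | right j => rw [Fin.addCases_right]; split_ifs <;> simp [hg]

lemma RootMultiplicitiesCoprime.resultant_ne_zero (hf : RootMultiplicitiesCoprime n f)
    (hf0 : f ≠ 0) (ha : a ≠ 0) {h : K[X][X]} (h0 : h ≠ 0) (hdeg : h.natDegree < n) :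
    resultant h (C f * X ^ n - C (C a)) h.natDegree n ≠ 0 := by
  have hn : n ≠ 0 := by omega
  set φ := algebraMap K[X] (FractionRing K[X])
  have hφ : Function.Injective φ := IsFractionRing.injective _ _
  have hφf : φ f ≠ 0 := (map_ne_zero_iff φ hφ).2 hf0
  have hgdeg : (C f * X ^ n - C (C a)).natDegree = n := by
    rw [natDegree_sub_C, natDegree_C_mul_X_pow n f hf0]
  have hmap : (C f * X ^ n - C (C a)).map φ = C (φ f) * (X ^ n - C (φ (C a) / φ f)) := by
    rw [mul_sub, ← C_mul, mul_div_cancel₀ _ hφf]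
    simp
  have hcoprime : IsCoprime (h.map φ) ((C f * X ^ n - C (C a)).map φ) := by
    rw [hmap]
    refine (isCoprime_mul_unit_left_right (isUnit_C.2 hφf.isUnit) _ _).2 ?_
    refine ((hf.irreducible_X_pow_sub_C_div hf0 hn ha).coprime_iff_not_dvd.2 fun hdvd => ?_).symm
    have hle := natDegree_le_of_dvd hdvd ((Polynomial.map_ne_zero_iff hφ).2 h0)
    rw [natDegree_X_pow_sub_C, natDegree_map_eq_of_injective hφ] at hle
    omega
  intro hres
  refine (resultant_eq_zero_iff.1 ?_).2 hcoprime
  rw [natDegree_map_eq_of_injective hφ, natDegree_map_eq_of_injective hφ, hgdeg,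
    resultant_map_map, hres, map_zero]

-- The resultant of `h` and `f Y ^ n - a` is nonzero, of degree below `M`, and divisible by
-- `X ^ M` as soon as both polynomials vanish at `G` modulo `X ^ M`.
lemma RootMultiplicitiesCoprime.not_X_pow_dvd_eval (hf : RootMultiplicitiesCoprime n f)
    (hf0 : f ≠ 0) (ha : a ≠ 0) {M B : ℕ} (hB : 2 * n * B < M) (hfB : f.natDegree ≤ B)
    {h : K[X][X]} (h0 : h ≠ 0) (hdeg : h.natDegree < n) (hhB : ∀ i, (h.coeff i).natDegree ≤ B)
    {G : K[X]} (hG : X ^ M ∣ f * G ^ n - C a) : ¬ X ^ M ∣ h.eval G := by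
  intro hdvd
  set g : K[X][X] := C f * X ^ n - C (C a) with hg
  have hgdeg : g.natDegree ≤ n := by
    rw [hg, natDegree_sub_C]
    exact natDegree_C_mul_X_pow_le f n
  have hgB : ∀ i, (g.coeff i).natDegree ≤ B := fun i => by
    rw [hg, coeff_sub, coeff_C_mul, coeff_X_pow, coeff_C]
    refine (natDegree_sub_le _ _).trans (max_le ?_ ?_) <;> split_ifs <;> simp [hfB]
  obtain ⟨p, q, -, -, hpq⟩ := exists_mul_add_mul_eq_C_resultant h g le_rfl hgdeg (Or.inr (by omega))
  have hres : X ^ M ∣ h.resultant g h.natDegree n := by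
    have heval := congrArg (eval G) hpq
    rw [eval_C, eval_add, eval_mul, eval_mul] at heval
    rw [← heval]
    exact dvd_add (dvd_mul_of_dvd_left hdvd _) (dvd_mul_of_dvd_left (by simpa [hg] using hG) _)
  have hlt : (h.resultant g h.natDegree n).natDegree < M :=
    (natDegree_resultant_le h g _ _ hhB hgB).trans_lt
      ((Nat.mul_le_mul_right B (by omega)).trans_lt hB)
  have hle := natDegree_le_of_dvd hres (hf.resultant_ne_zero hf0 ha h0 hdeg)
  rw [natDegree_X_pow] at hle
  omega

lemma RootMultiplicitiesCoprime.sum_eval_mul_X_pow_ne_zero (hf : RootMultiplicitiesCoprime n f)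
    (hf0 : f ≠ 0) (ha : a ≠ 0) {M B J : ℕ} (hB : 2 * n * B < M) (hfB : f.natDegree ≤ B)
    {h : ℕ → K[X][X]} (h0 : ∃ i < J, h i ≠ 0) (hdeg : ∀ i, (h i).natDegree < n)
    (hhB : ∀ i j, ((h i).coeff j).natDegree ≤ B) {G : K[X]} (hG : X ^ M ∣ f * G ^ n - C a) :
    ∑ i ∈ range J, (h i).eval G * X ^ (M * i) ≠ 0 := by
  classical
  intro hsum
  set k := Nat.find h0
  obtain ⟨hkJ, hk0⟩ : k < J ∧ h k ≠ 0 := Nat.find_spec h0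
  have hbelow : ∀ i < k, h i = 0 := fun i hi => by
    by_contra hne
    exact Nat.find_min h0 hi ⟨hi.trans hkJ, hne⟩
  refine hf.not_X_pow_dvd_eval hf0 ha hB hfB hk0 (hdeg k) (hhB k) hG ?_
  have hlow : ∑ i ∈ Ico 0 k, (h i).eval G * X ^ (M * i) = 0 :=
    sum_eq_zero fun i hi => by rw [hbelow i (mem_Ico.1 hi).2, eval_zero, zero_mul]
  have hhigh : X ^ (M * (k + 1)) ∣ ∑ i ∈ Ico (k + 1) J, (h i).eval G * X ^ (M * i) :=
    dvd_sum fun i hi =>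
      dvd_mul_of_dvd_right (pow_dvd_pow _ (Nat.mul_le_mul_left _ (mem_Ico.1 hi).1)) _
  rw [range_eq_Ico, ← sum_Ico_consecutive _ (Nat.zero_le k) hkJ.le, hlow, zero_add,
    sum_eq_sum_Ico_succ_bot hkJ] at hsum
  have hterm : X ^ (M * (k + 1)) ∣ (h k).eval G * X ^ (M * k) := by
    rw [eq_neg_of_add_eq_zero_left hsum]
    exact dvd_neg.2 hhigh
  rw [mul_add, mul_one, pow_add, mul_comm ((h k).eval G)] at hterm
  exact (mul_dvd_mul_iff_left (pow_ne_zero _ X_ne_zero)).1 hterm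

end Kummer

section Stepanov

open Polynomial

variable {K : Type*} [Field K]

lemma exists_sum_C_mul_eq_zero_of_lt_card {ι : Type*} {s : Finset ι} {g : ι → K[X]} {D : ℕ}
    (hg : ∀ i ∈ s, (g i).degree < D) (hD : D < s.card) :
    ∃ c : ι → K, (∃ i ∈ s, c i ≠ 0) ∧ ∑ i ∈ s, C (c i) * g i = 0 := by
  classical
  have hdep : ¬ LinearIndependent K fun i : s =>
      (⟨g i, mem_degreeLT.2 (hg i i.2)⟩ : degreeLT K D) := fun hli => by
    have : Module.Finite K (degreeLT K D) := Module.Finite.equiv (degreeLTEquiv K D).symm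
    have hle := hli.fintype_card_le_finrank
    rw [(degreeLTEquiv K D).finrank_eq, Module.finrank_fin_fun, Fintype.card_coe] at hle
    omega
  obtain ⟨c, hc, i, hi⟩ := Fintype.not_linearIndependent_iff.1 hdep
  refine ⟨fun j => if hj : j ∈ s then c ⟨j, hj⟩ else 0, ⟨i, i.2, by simpa using hi⟩, ?_⟩
  have hsum := congrArg Subtype.val hc
  rw [AddSubmonoidClass.coe_finsetSum, ZeroMemClass.coe_zero] at hsum
  rw [← sum_coe_sort, ← hsum]
  exact sum_congr rfl fun j _ => by simp [smul_eq_C_mul]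

/-- The box of exponents `(i, j, b)` in Stepanov's auxiliary polynomial. -/
def stepanovBox (J n B : ℕ) : Finset (ℕ × ℕ × ℕ) := range J ×ˢ range n ×ˢ range B

/-- Stepanov's auxiliary polynomial `∑ c (i, j, b) X ^ b G ^ j X ^ (M i)`, the sum running over
`i < J`, `j < n` and `b < B`. -/
noncomputable def stepanovPoly (c : ℕ × ℕ × ℕ → K) (G : K[X]) (M J n B : ℕ) : K[X] :=
  ∑ t ∈ stepanovBox J n B, C (c t) * X ^ t.2.2 * G ^ t.2.1 * X ^ (M * t.1)

lemma card_stepanovBox (J n B : ℕ) : (stepanovBox J n B).card = J * (n * B) := by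
  simp [stepanovBox]

lemma mem_stepanovBox {J n B : ℕ} {t : ℕ × ℕ × ℕ} :
    t ∈ stepanovBox J n B ↔ t.1 < J ∧ t.2.1 < n ∧ t.2.2 < B := by
  simp [stepanovBox]

lemma stepanovPoly_ne_zero {n M B J : ℕ} {a : K} {f G : K[X]}
    (hf : RootMultiplicitiesCoprime n f) (hf0 : f ≠ 0) (ha : a ≠ 0) (hB : 2 * n * B < M)
    (hfB : f.natDegree ≤ B) (hG : X ^ M ∣ f * G ^ n - C a) {c : ℕ × ℕ × ℕ → K}
    (hc : ∃ t ∈ stepanovBox J n B, c t ≠ 0) : stepanovPoly c G M J n B ≠ 0 := by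
  obtain ⟨⟨i₀, j₀, b₀⟩, ht, hct⟩ := hc
  obtain ⟨hi₀, hj₀, hb₀⟩ := mem_stepanovBox.1 ht
  set u : ℕ → ℕ → K[X] := fun i j => ∑ b ∈ range B, C (c (i, j, b)) * X ^ b
  set h : ℕ → K[X][X] := fun i => ∑ j ∈ range n, C (u i j) * X ^ j
  have hcoeff : ∀ i j, (h i).coeff j = if j < n then u i j else 0 := fun i j => by
    simp [h, coeff_X_pow]
  have hudeg : ∀ i j, (u i j).natDegree ≤ B := fun i j =>
    natDegree_sum_le_of_forall_le _ _ fun b hb =>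
      (natDegree_C_mul_X_pow_le _ _).trans (mem_range.1 hb).le
  have hne : h i₀ ≠ 0 := fun hz => hct <| by
    have hu : u i₀ j₀ = 0 := by rw [← coeff_zero j₀, ← hz, hcoeff, if_pos hj₀]
    simpa [u, finsetSum_coeff, coeff_X_pow, hb₀] using congrArg (coeff · b₀) hu
  have hsum : stepanovPoly c G M J n B = ∑ i ∈ range J, (h i).eval G * X ^ (M * i) := by
    simp only [stepanovPoly, stepanovBox, sum_product, h, u, eval_finsetSum, eval_mul, eval_C,
      eval_pow, eval_X, sum_mul]
  rw [hsum]
  refine hf.sum_eval_mul_X_pow_ne_zero hf0 ha hB hfB ⟨i₀, hi₀, hne⟩ (fun i => ?_)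
    (fun i j => ?_) hG
  · refine (natDegree_sum_le_of_forall_le (n := n - 1) _ _ fun j hj => ?_).trans_lt (by omega)
    have hjn := mem_range.1 hj
    exact (natDegree_C_mul_X_pow_le _ _).trans (by omega)
  · rw [hcoeff]
    split_ifs
    · exact hudeg i j
    · simp

lemma natDegree_stepanovPoly_le (c : ℕ × ℕ × ℕ → K) (G : K[X]) (M J n B : ℕ) :
    (stepanovPoly c G M J n B).natDegree ≤ B + J * M + n * G.natDegree := by
  refine natDegree_sum_le_of_forall_le _ _ fun t ht => ?_
  obtain ⟨hi, hj, hb⟩ := mem_stepanovBox.1 ht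
  have hiM : M * t.1 ≤ J * M := by rw [mul_comm]; exact Nat.mul_le_mul_right M hi.le
  have hjG : t.2.1 * G.natDegree ≤ n * G.natDegree := Nat.mul_le_mul_right _ hj.le
  have hterm : (C (c t) * X ^ t.2.2 * G ^ t.2.1 * X ^ (M * t.1)).natDegree ≤
      t.2.2 + t.2.1 * G.natDegree + M * t.1 := by
    compute_degree
  omega

/-- On the points where `G ^ (M + 1) = ζ`, raising `stepanovPoly (c ^ M) G` to the power `M` and
multiplying by `G ^ n` gives this polynomial of much smaller degree. -/
noncomputable def reducedStepanovPoly (c : ℕ × ℕ × ℕ → K) (G : K[X]) (ζ : K) (M J n B : ℕ) :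
    K[X] :=
  ∑ t ∈ stepanovBox J n B,
    C (c t) * (X ^ (t.2.2 * M + t.1) * (C (ζ ^ t.2.1) * G ^ (n - t.2.1)))

lemma degree_reducedStepanovPoly_term_lt (G : K[X]) (ζ : K) {M J n B : ℕ} {t : ℕ × ℕ × ℕ}
    (ht : t ∈ stepanovBox J n B) :
    (X ^ (t.2.2 * M + t.1) * (C (ζ ^ t.2.1) * G ^ (n - t.2.1))).degree <
      ((B * M + J + n * G.natDegree : ℕ) : WithBot ℕ) := by
  obtain ⟨hi, -, hb⟩ := mem_stepanovBox.1 ht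
  refine degree_le_natDegree.trans_lt (Nat.cast_lt.2 ?_)
  have hbM : t.2.2 * M ≤ B * M := Nat.mul_le_mul_right M hb.le
  have hjG : (n - t.2.1) * G.natDegree ≤ n * G.natDegree :=
    Nat.mul_le_mul_right _ (Nat.sub_le _ _)
  have hterm : (X ^ (t.2.2 * M + t.1) * (C (ζ ^ t.2.1) * G ^ (n - t.2.1))).natDegree ≤
      t.2.2 * M + t.1 + (n - t.2.1) * G.natDegree := by
    compute_degree
  omega

variable [Fintype K] {p t M : ℕ} [Fact p.Prime] [CharP K p]

lemma eval_stepanovPoly_pow_mul_eval_pow (hM : M = p ^ t) (hK : Fintype.card K = M ^ 2)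
    (c : ℕ × ℕ × ℕ → K) {G : K[X]} {ζ x : K} (hx : G.eval x ^ (M + 1) = ζ) (J n B : ℕ) :
    (stepanovPoly (fun t => c t ^ M) G M J n B).eval x ^ M * G.eval x ^ n =
      (reducedStepanovPoly c G ζ M J n B).eval x := by
  have hfrob : ∀ y : K, (y ^ M) ^ M = y := fun y => by
    rw [← pow_mul, ← sq, ← hK, FiniteField.pow_card]
  have hsum : ∀ u : ℕ × ℕ × ℕ → K,
      (∑ t ∈ stepanovBox J n B, u t) ^ M = ∑ t ∈ stepanovBox J n B, u t ^ M := fun u => by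
    rw [hM, sum_pow_char_pow]
  rw [stepanovPoly, reducedStepanovPoly, eval_finsetSum, eval_finsetSum, hsum, sum_mul]
  refine sum_congr rfl fun t ht => ?_
  obtain ⟨-, hj, -⟩ := mem_stepanovBox.1 ht
  have hGn : G.eval x ^ n = G.eval x ^ (n - t.2.1) * G.eval x ^ t.2.1 := by
    rw [← pow_add, Nat.sub_add_cancel hj.le]
  have hxi : (x ^ (M * t.1)) ^ M = x ^ t.1 := by rw [pow_mul, pow_right_comm, hfrob]
  simp only [eval_mul, eval_C, eval_pow, eval_X, mul_pow, hfrob, hxi, ← hx, hGn]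
  ring

lemma card_le_of_stepanov (hM : M = p ^ t) (hK : Fintype.card K = M ^ 2) {n s B J : ℕ}
    (hs : n * s + 1 = M) {f : K[X]} (hf : RootMultiplicitiesCoprime n f) (hf0 : f.eval 0 ≠ 0)
    {ζ : K} (hζ : ζ ≠ 0) (hB : 2 * n * B < M) (hfB : f.natDegree ≤ B)
    (hJ : B * M + J + f.natDegree * M < n * J * B) {V : Finset K}
    (hV : ∀ x ∈ V, f.eval x ^ (s * (M + 1)) = ζ) :
    V.card ≤ B + J * M + f.natDegree * M := by
  have hGdeg : n * (f ^ s).natDegree ≤ f.natDegree * M := by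
    rw [natDegree_pow, ← mul_assoc, mul_comm]
    exact Nat.mul_le_mul_left _ (by omega)
  have hG : X ^ M ∣ f * (f ^ s) ^ n - C (f.eval 0 ^ M) := by
    have hpow : f * (f ^ s) ^ n - C (f.eval 0 ^ M) = (f - C (f.eval 0)) ^ M := by
      conv_rhs => rw [hM, sub_pow_char_pow, ← hM]
      rw [← pow_mul, ← pow_succ', mul_comm s n, hs, C_pow]
    rw [hpow]
    exact pow_dvd_pow_of_dvd (X_dvd_iff.2 (by simp [coeff_zero_eq_eval_zero])) M
  have hcard : B * M + J + n * (f ^ s).natDegree < (stepanovBox J n B).card := by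
    rw [card_stepanovBox, mul_left_comm, ← mul_assoc]
    omega
  obtain ⟨c, ⟨t, ht, hct⟩, hc⟩ := exists_sum_C_mul_eq_zero_of_lt_card
    (fun t ht => degree_reducedStepanovPoly_term_lt (f ^ s) ζ ht) hcard
  set E := stepanovPoly (fun t => c t ^ M) (f ^ s) M J n B
  have hE : E ≠ 0 := stepanovPoly_ne_zero hf (by rintro rfl; simp at hf0) (pow_ne_zero M hf0) hB
    hfB hG ⟨t, ht, pow_ne_zero M hct⟩
  have hroot : ∀ x ∈ V, E.eval x = 0 := fun x hx => by
    have hGx : (f ^ s).eval x ^ (M + 1) = ζ := by rw [eval_pow, ← pow_mul, hV x hx]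
    have hGx0 : (f ^ s).eval x ≠ 0 := fun h0 => hζ <| by
      rw [← hGx, h0, zero_pow M.succ_ne_zero]
    have hzero := eval_stepanovPoly_pow_mul_eval_pow hM hK c hGx J n B
    rw [reducedStepanovPoly, hc, eval_zero] at hzero
    exact eq_zero_of_pow_eq_zero ((mul_eq_zero.1 hzero).resolve_right (pow_ne_zero n hGx0))
  calc V.card ≤ E.natDegree := card_le_degree_of_subset_roots fun x hx =>
        (mem_roots hE).2 (hroot x (mem_def.2 hx))
    _ ≤ B + J * M + n * (f ^ s).natDegree := natDegree_stepanovPoly_le _ _ _ _ _ _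
    _ ≤ B + J * M + f.natDegree * M := by omega

-- Stepanov's bound with `B ≈ M / (2 n)` and `J ≈ M / n`.
lemma mul_card_le_of_stepanov (hM : M = p ^ t) (hK : Fintype.card K = M ^ 2) {n s : ℕ}
    (hn : 0 < n) (hs : n * s + 1 = M) {f : K[X]} (hf : RootMultiplicitiesCoprime n f)
    (hf0 : f.eval 0 ≠ 0) (hfM : 4 * n * (f.natDegree + 2) ≤ M) {ζ : K} (hζ : ζ ≠ 0)
    {V : Finset K} (hV : ∀ x ∈ V, f.eval x ^ (s * (M + 1)) = ζ) :
    n * V.card ≤ M ^ 2 + n * (9 * f.natDegree + 25) * M := by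
  set m := f.natDegree
  set B := (M - 1) / (2 * n)
  set k := 8 * (m + 3) with hk
  have hM8 : 8 ≤ M := by nlinarith
  have hBM : B ≤ M := (Nat.div_le_self _ _).trans (Nat.sub_le _ _)
  have hnB : 2 * n * B ≤ M - 1 := Nat.mul_div_le _ _
  have hMB : M ≤ 4 * n * B := by
    have hlt : M - 1 < 2 * n * (B + 1) := Nat.lt_mul_div_succ (M - 1) (by omega)
    have hle : M ≤ 2 * n * B + 2 * n := by rw [mul_add, mul_one] at hlt; omega
    nlinarith
  have hmB : m ≤ B := Nat.le_of_mul_le_mul_left (by nlinarith : n * m ≤ n * B) hn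
  have hJ : B * M + (s + k) + m * M < n * (s + k) * B := by
    have hBs : n * s * B + B = B * M := by rw [← hs]; ring
    have hMk : M * k ≤ 4 * (n * B * k) := by nlinarith
    have hMk' : M * k = 8 * (m * M + 3 * M) := by rw [hk]; ring
    have hkM : 8 * k ≤ M * k := Nat.mul_le_mul_right _ hM8
    have hsM : s ≤ M := by nlinarith
    linarith
  have hcard := card_le_of_stepanov hM hK hs hf hf0 hζ (by omega) hmB hJ hV
  calc n * V.card ≤ n * (B + (s + k) * M + m * M) := Nat.mul_le_mul_left _ hcard
    _ = n * B + n * s * M + n * (k + m) * M := by ring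
    _ ≤ n * M + M * M + n * (k + m) * M := by gcongr; omega
    _ = M ^ 2 + n * (9 * m + 25) * M := by rw [hk]; ring

end Stepanov

section NormSums

open Polynomial

lemma exists_coprime_factorization {ι : Type*} (s : Finset ι) (e : ι → ℕ) {N : ℕ} (hN : N ≠ 0) :
    ∃ (g n : ℕ) (e' : ι → ℕ), g * n = N ∧ (∀ i ∈ s, e i = e' i * g) ∧
      ∀ m, (∀ i ∈ s, n ∣ m * e' i) → n ∣ m := by
  have hgpos : 0 < N.gcd (s.gcd e) := Nat.gcd_pos_of_pos_left _ (Nat.pos_of_ne_zero hN)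
  set g := N.gcd (s.gcd e) with hg
  obtain ⟨n, hn⟩ : g ∣ N := Nat.gcd_dvd_left _ _
  have hge : ∀ i ∈ s, g ∣ e i := fun i hi => (Nat.gcd_dvd_right _ _).trans (Finset.gcd_dvd hi)
  refine ⟨g, n, fun i => e i / g, hn.symm, fun i hi => (Nat.div_mul_cancel (hge i hi)).symm,
    fun m hm => ?_⟩
  have hdvd : N ∣ m * s.gcd e := by
    have hmul : m * s.gcd e = s.gcd fun i => m * e i := by rw [Finset.gcd_mul_left]; simp
    rw [hmul]
    refine Finset.dvd_gcd fun i hi => ?_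
    rw [← Nat.div_mul_cancel (hge i hi), hn, mul_comm g n, ← mul_assoc]
    exact Nat.mul_dvd_mul_right (hm i hi) g
  have hdvd' : g * n ∣ g * m := by
    rw [← hn, mul_comm g m, hg, ← Nat.gcd_mul_left]
    exact Nat.dvd_gcd (dvd_mul_left _ _) hdvd
  exact Nat.dvd_of_mul_dvd_mul_left hgpos hdvd'

lemma rootMultiplicity_prod_C_sub_X_pow {K ι : Type*} [Field K] {s : Finset ι} {v : ι → K}
    (hv : Set.InjOn v s) (e : ι → ℕ) {i : ι} (hi : i ∈ s) :
    (∏ j ∈ s, (C (v j) - X) ^ e j).rootMultiplicity (v i) = e i := by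
  classical
  have hne : ∀ a : K, C a - X ≠ 0 := fun a => sub_ne_zero.2 (X_ne_C a).symm
  rw [← count_roots, roots_prod _ _ (prod_ne_zero_iff.2 fun j _ => pow_ne_zero _ (hne _)),
    Multiset.count_bind]
  have hcount : ∀ j ∈ s, ((C (v j) - X) ^ e j).roots.count (v i) = if i = j then e j else 0 := by
    intro j hj
    rw [roots_pow, ← neg_sub, roots_neg, roots_X_sub_C, Multiset.count_nsmul,
      Multiset.count_singleton, hv.eq_iff hi hj]
    split_ifs <;> simp
  exact (sum_congr rfl hcount).trans (by simp [hi])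

lemma natDegree_prod_C_sub_X_pow {K ι : Type*} [Field K] (s : Finset ι) (v : ι → K) (e : ι → ℕ) :
    (∏ j ∈ s, (C (v j) - X) ^ e j).natDegree = ∑ j ∈ s, e j := by
  rw [natDegree_prod _ _ fun j _ => pow_ne_zero _ (sub_ne_zero.2 (X_ne_C (v j)).symm)]
  refine sum_congr rfl fun j _ => ?_
  rw [natDegree_pow, ← neg_sub, natDegree_neg, natDegree_X_sub_C, mul_one]

-- Subtracting `A` from every fibre count does not change the sum and makes all terms one-signed.
lemma norm_sum_comp_le_of_card_fiber_le {α β : Type*} [Fintype α] [DecidableEq β] {φ : α → β}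
    {w : β → ℂ} {μ : Finset β} {A : ℝ} (hw : ∀ b ∈ μ, ‖w b‖ ≤ 1) (hsum : ∑ b ∈ μ, w b = 0)
    (hoff : ∀ x, φ x ∉ μ → w (φ x) = 0) (hA : ∀ b ∈ μ, (#{x | φ x = b} : ℝ) ≤ A) :
    ‖∑ x, w (φ x)‖ ≤ #μ * A - #{x | φ x ∈ μ} := by
  have hmaps : ∀ x ∈ ({x | φ x ∈ μ} : Finset α), φ x ∈ μ := fun x hx => (mem_filter.1 hx).2
  have hfiber : ∀ b ∈ μ, ({x ∈ ({x | φ x ∈ μ} : Finset α) | φ x = b} : Finset α) =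
      ({x | φ x = b} : Finset α) := fun b hb => by
    ext x
    simp only [mem_filter, mem_univ, true_and, and_iff_right_iff_imp]
    rintro rfl
    exact hb
  have hcard : (#{x | φ x ∈ μ} : ℝ) = ∑ b ∈ μ, (#{x | φ x = b} : ℝ) := by
    rw [card_eq_sum_card_fiberwise hmaps, Nat.cast_sum]
    exact sum_congr rfl fun b hb => by rw [hfiber b hb]
  have hfiberwise : ∑ x, w (φ x) = ∑ b ∈ μ, ((#{x | φ x = b} - A : ℝ) : ℂ) * w b := by
    have hrestrict : ∑ x, w (φ x) = ∑ x with φ x ∈ μ, w (φ x) :=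
      (sum_filter_of_ne fun x _ hx => not_imp_comm.1 (hoff x) hx).symm
    have hshift : ∀ N : β → ℝ,
        ∑ b ∈ μ, ((N b - A : ℝ) : ℂ) * w b = ∑ b ∈ μ, (N b : ℂ) * w b := fun N => by
      simp only [Complex.ofReal_sub, sub_mul]
      rw [sum_sub_distrib, ← mul_sum, hsum, mul_zero, sub_zero]
    rw [hrestrict, ← sum_fiberwise_of_maps_to hmaps, hshift]
    refine sum_congr rfl fun b hb => ?_
    rw [hfiber b hb, sum_congr rfl fun x hx => by rw [(mem_filter.1 hx).2], sum_const,
      nsmul_eq_mul, Complex.ofReal_natCast]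
  calc ‖∑ x, w (φ x)‖ ≤ ∑ b ∈ μ, (A - #{x | φ x = b}) := by
        rw [hfiberwise]
        refine norm_sum_le_of_le _ fun b hb => ?_
        rw [norm_mul, Complex.norm_real, Real.norm_of_nonpos (sub_nonpos.2 (hA b hb)), neg_sub]
        exact mul_le_of_le_one_right (sub_nonneg.2 (hA b hb)) (hw b hb)
    _ = #μ * A - #{x | φ x ∈ μ} := by rw [sum_sub_distrib, sum_const, nsmul_eq_mul, hcard]

variable {F : Type*} [Field F]

lemma exists_mulChar_pow_ne_one {R : Type*} [CommMonoidWithZero R] {χ : MulChar F R} {e : ℕ}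
    (hχ : χ ^ e ≠ 1) : ∃ c : F, c ≠ 0 ∧ χ c ^ e ≠ 1 := by
  obtain ⟨c, hc⟩ := MulChar.ne_one_iff.1 hχ
  exact ⟨c, c.ne_zero, by rwa [MulChar.pow_apply_coe] at hc⟩

lemma norm_mulChar_apply_of_ne_zero [Finite F] (χ : MulChar F ℂ) {x : F} (hx : x ≠ 0) :
    ‖χ x‖ = 1 := by
  have := Fintype.ofFinite F
  refine Complex.norm_eq_one_of_pow_eq_one (n := Fintype.card F - 1) ?_
    (Nat.sub_pos_of_lt Fintype.one_lt_card).ne'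
  rw [← map_pow, FiniteField.pow_card_sub_one_eq_one x hx, map_one]

lemma norm_mulChar_apply_le_one [Finite F] (χ : MulChar F ℂ) (x : F) : ‖χ x‖ ≤ 1 := by
  rcases eq_or_ne x 0 with rfl | hx
  · simp [MulChar.map_zero]
  · exact (norm_mulChar_apply_of_ne_zero χ hx).le

variable [Fintype F]

lemma sum_nthRootsFinset_mulChar_eq_zero {R : Type*} [CommRing R] [IsDomain R] {χ : MulChar F R}
    {g n : ℕ} (hgn : g * n = Fintype.card F - 1) (hχ : χ ^ g ≠ 1) :
    ∑ ζ ∈ nthRootsFinset n (1 : F), χ ζ = 0 := by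
  have hn : 0 < n := Nat.pos_of_ne_zero fun h => by
    have := Fintype.one_lt_card (α := F)
    rw [h, mul_zero] at hgn
    omega
  obtain ⟨c, hc0, hc⟩ := exists_mulChar_pow_ne_one hχ
  have hcg : (c ^ g) ^ n = 1 := by
    rw [← pow_mul, hgn, FiniteField.pow_card_sub_one_eq_one c hc0]
  have hshift : ∑ ζ ∈ nthRootsFinset n (1 : F), χ (c ^ g * ζ) =
      ∑ ζ ∈ nthRootsFinset n (1 : F), χ ζ := by
    refine sum_equiv (Equiv.mulLeft₀ (c ^ g) (pow_ne_zero g hc0)) (fun ζ => ?_) fun _ _ => rfl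
    simp [mem_nthRootsFinset hn, mul_pow, hcg]
  simp only [map_mul, map_pow, ← mul_sum] at hshift
  exact (mul_eq_zero.1 (sub_one_mul (χ c ^ g) _ |>.trans (sub_eq_zero.2 hshift))).resolve_left
    (sub_ne_zero.2 hc)

variable {K : Type*} [Field K] [Fintype K] [Algebra F K]

lemma mul_card_norm_pow_eq_le {k g n : ℕ} (hK : Fintype.card K = (Fintype.card F ^ k) ^ 2)
    (hgn : g * n = Fintype.card F - 1) {f : K[X]} (hf : RootMultiplicitiesCoprime n f)
    (hf0 : f.eval 0 ≠ 0) (hfM : 4 * n * (f.natDegree + 2) ≤ Fintype.card F ^ k) {ζ : F}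
    (hζ : ζ ≠ 0) {V : Finset K} (hV : ∀ x ∈ V, Algebra.norm F (f.eval x) ^ g = ζ) :
    n * #V ≤ (Fintype.card F ^ k) ^ 2 +
      n * (9 * f.natDegree + 25) * Fintype.card F ^ k := by
  obtain ⟨p, hp⟩ := CharP.exists F
  obtain ⟨j, hpp, hj⟩ := FiniteField.card F p
  have : Fact p.Prime := ⟨hpp⟩
  have : CharP K p := charP_of_injective_algebraMap (algebraMap F K).injective p
  set q := Fintype.card F with hq
  have hq1 : 1 < q := Fintype.one_lt_card
  have hn : 0 < n := Nat.pos_of_ne_zero fun h => by rw [h, mul_zero] at hgn; omega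
  have hM1 : 1 ≤ q ^ k := Nat.one_le_pow _ _ (by omega)
  obtain ⟨w, hw⟩ : q - 1 ∣ q ^ k - 1 := by simpa using Nat.sub_dvd_pow_sub_pow q 1 k
  have hs : n * (g * w) + 1 = q ^ k := by
    rw [← mul_assoc, mul_comm n g, hgn, ← hw, Nat.sub_add_cancel hM1]
  have hexp : (Nat.card K - 1) / (Nat.card F - 1) = w * (q ^ k + 1) := by
    rw [Nat.card_eq_fintype_card, Nat.card_eq_fintype_card, hK, ← hq, ← one_pow 2, Nat.sq_sub_sq,
      one_pow, hw, mul_left_comm, mul_comm (q ^ k + 1), Nat.mul_div_cancel_left _ (by omega)]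
  refine mul_card_le_of_stepanov (p := p) (t := j * k) (by rw [hj, pow_mul]) hK hn hs hf hf0
    hfM (ζ := algebraMap F K ζ) (by simpa using hζ) fun x hx => ?_
  rw [← hV x hx, map_pow, FiniteField.algebraMap_norm_eq_pow, hexp, ← pow_mul]
  ring_nf

lemma norm_sum_mulChar_norm_pow_le {k g n : ℕ} (hK : Fintype.card K = (Fintype.card F ^ k) ^ 2)
    (hgn : g * n = Fintype.card F - 1) {χ : MulChar F ℂ} (hχ : χ ^ g ≠ 1) {f : K[X]}
    (hf : RootMultiplicitiesCoprime n f) (hf0 : f.eval 0 ≠ 0)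
    (hfM : 4 * n * (f.natDegree + 2) ≤ Fintype.card F ^ k) :
    ‖∑ x : K, χ (Algebra.norm F (f.eval x) ^ g)‖ ≤
      n * (9 * f.natDegree + 25) * Fintype.card F ^ k + f.natDegree := by
  classical
  have hq1 : 1 < Fintype.card F := Fintype.one_lt_card
  have hgn0 : g * n ≠ 0 := by omega
  have hg0 : g ≠ 0 := left_ne_zero_of_mul hgn0
  have hn : 0 < n := Nat.pos_of_ne_zero (right_ne_zero_of_mul hgn0)
  have hnR : (0 : ℝ) < n := Nat.cast_pos.2 hn
  set m := f.natDegree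
  set M := Fintype.card F ^ k
  set μ := nthRootsFinset n (1 : F)
  have hmem : ∀ x : K, f.eval x ≠ 0 → Algebra.norm F (f.eval x) ^ g ∈ μ := fun x hx => by
    rw [mem_nthRootsFinset hn, ← pow_mul, hgn]
    exact FiniteField.pow_card_sub_one_eq_one _ (Algebra.norm_ne_zero_iff.2 hx)
  have hμcard : #μ ≤ n := (Multiset.toFinset_card_le _).trans (card_nthRoots n (1 : F))
  set A : ℝ := (M ^ 2 + n * (9 * m + 25) * M) / n with hA
  have hfiber : ∀ ζ ∈ μ, (#{x : K | Algebra.norm F (f.eval x) ^ g = ζ} : ℝ) ≤ A := fun ζ hζ => by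
    rw [hA, le_div_iff₀' hnR]
    exact_mod_cast mul_card_norm_pow_eq_le hK hgn hf hf0 hfM
      (ne_zero_of_mem_nthRootsFinset one_ne_zero hζ) fun x hx => (mem_filter.1 hx).2
  have hroots : #{x : K | Algebra.norm F (f.eval x) ^ g ∉ μ} ≤ m :=
    card_le_degree_of_subset_roots fun x hx => by
      have hx0 := not_imp_comm.1 (hmem x) (mem_filter.1 hx).2
      exact (mem_roots (by rintro rfl; simp at hf0)).2 hx0
  have hcard : (M : ℝ) ^ 2 ≤ #{x : K | Algebra.norm F (f.eval x) ^ g ∈ μ} + m := by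
    rw [← Nat.cast_pow, ← hK, ← card_univ, ← card_filter_add_card_filter_not
      (fun x : K => Algebra.norm F (f.eval x) ^ g ∈ μ)]
    exact_mod_cast Nat.add_le_add_left hroots _
  have hbound := norm_sum_comp_le_of_card_fiber_le (w := χ)
    (fun ζ _ => norm_mulChar_apply_le_one χ ζ) (sum_nthRootsFinset_mulChar_eq_zero hgn hχ)
    (fun x hx => by
      rw [not_imp_comm.1 (hmem x) hx, Algebra.norm_zero, zero_pow hg0, MulChar.map_zero]) hfiber
  have hμA : #μ * A ≤ n * A :=
    mul_le_mul_of_nonneg_right (Nat.cast_le.2 hμcard) (by positivity)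
  rw [hA, mul_div_cancel₀ _ hnR.ne', ← hA] at hμA
  have hM : (M : ℝ) = (Fintype.card F : ℝ) ^ k := Nat.cast_pow _ _
  rw [← hM]
  linarith

/-- The character sum attached to `∏ z ∈ Z, χ (z - x) ^ e z` over an extension `K` of `F`, with
`χ` lifted to `K` through the norm. -/
noncomputable def normCharSum (χ : MulChar F ℂ) (Z : Finset F) (e : F → ℕ) (K : Type*) [Field K]
    [Fintype K] [Algebra F K] : ℂ :=
  ∑ x : K, ∏ z ∈ Z, χ (Algebra.norm F (algebraMap F K z - x)) ^ e z

lemma exists_norm_normCharSum_le {χ : MulChar F ℂ} {Z : Finset F} {e : F → ℕ} {z₀ : F}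
    (hz₀ : z₀ ∈ Z) (hχ : χ ^ e z₀ ≠ 1) (hZ : 0 ∉ Z) :
    ∃ (R : ℝ) (M₀ : ℕ), ∀ (K : Type*) [Field K] [Fintype K] [Algebra F K] (k : ℕ),
      Fintype.card K = (Fintype.card F ^ k) ^ 2 → M₀ ≤ Fintype.card F ^ k →
      ‖normCharSum χ Z e K‖ ≤ R * Fintype.card F ^ k := by
  obtain ⟨g, n, e', hgn, hee', hcop⟩ := exists_coprime_factorization Z e
    (Nat.sub_pos_of_lt (Fintype.one_lt_card (α := F))).ne'
  have hχg : χ ^ g ≠ 1 := fun h => hχ <| by rw [hee' z₀ hz₀, mul_comm, pow_mul, h, one_pow]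
  set m := ∑ z ∈ Z, e' z
  refine ⟨n * (9 * m + 25) + m, 4 * n * (m + 2), fun K _ _ _ k hK hM => ?_⟩
  set f : K[X] := ∏ z ∈ Z, (C (algebraMap F K z) - X) ^ e' z with hf
  have hfdeg : f.natDegree = m := natDegree_prod_C_sub_X_pow _ _ _
  have hfcop : RootMultiplicitiesCoprime n f := fun l hl => hcop l fun z hz => by
    have hdvd := hl (algebraMap F K z)
    rwa [hf, rootMultiplicity_prod_C_sub_X_pow (algebraMap F K).injective.injOn e' hz] at hdvd
  have hf0 : f.eval 0 ≠ 0 := by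
    rw [hf, eval_prod, prod_ne_zero_iff]
    intro z hz
    have hz0 : z ≠ 0 := ne_of_mem_of_not_mem hz hZ
    simp [hz0]
  have hterm : normCharSum χ Z e K = ∑ x : K, χ (Algebra.norm F (f.eval x) ^ g) := by
    refine sum_congr rfl fun x _ => ?_
    simp only [hf, eval_prod, eval_pow, eval_sub, eval_C, eval_X, map_prod, map_pow, ← prod_pow]
    exact prod_congr rfl fun z hz => by rw [hee' z hz, pow_mul]
  have hle := norm_sum_mulChar_norm_pow_le hK hgn hχg hfcop hf0 (by rwa [hfdeg])
  have hM1 : (1 : ℝ) ≤ Fintype.card F ^ k := by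
    exact_mod_cast Nat.one_le_pow _ _ Fintype.card_pos
  rw [hterm]
  rw [hfdeg] at hle
  nlinarith [Nat.cast_nonneg (α := ℝ) m]

end NormSums

section LFunction

open Polynomial UniqueFactorizationMonoid

lemma finite_setOf_monic_natDegree_eq (R : Type*) [Semiring R] [Finite R] (k : ℕ) :
    {g : R[X] | g.Monic ∧ g.natDegree = k}.Finite := by
  refine Set.Finite.of_injOn (f := fun (g : R[X]) (i : Fin k) => g.coeff i) (t := Set.univ)
    (fun _ _ => Set.mem_univ _) ?_ Set.finite_univ
  rintro g ⟨hg, hgk⟩ h ⟨hh, hhk⟩ hgh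
  ext i
  rcases lt_trichotomy i k with hi | rfl | hi
  · exact congrFun hgh ⟨i, hi⟩
  · rw [← hgk, hg.coeff_natDegree, hgk, ← hhk, hh.coeff_natDegree]
  · rw [coeff_eq_zero_of_natDegree_lt (by omega), coeff_eq_zero_of_natDegree_lt (by omega)]

lemma pow_dvd_iff_le_count_normalizedFactors {F : Type*} [Field F] [DecidableEq F] {g P : F[X]}
    (hg : g.Monic) (hP : P.Monic) (hirr : Irreducible P) {a : ℕ} :
    P ^ a ∣ g ↔ a ≤ (normalizedFactors g).count P := by
  rw [pow_dvd_iff_le_emultiplicity, emultiplicity_eq_count_normalizedFactors hirr hg.ne_zero,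
    hP.normalize_eq_self, Nat.cast_le]

variable (F : Type*) [Field F] [Finite F]

/-- The monic polynomials of degree `k` over a finite field. -/
noncomputable def monicOfDegree (k : ℕ) : Finset F[X] :=
  (finite_setOf_monic_natDegree_eq F k).toFinset

open Classical in
/-- The pairs `(P, a)` with `P` monic irreducible and `natDegree P * a = i`, for `i ≠ 0`; they stand
for the prime powers `P ^ a` of degree `i`. -/
noncomputable def monicPrimePowers (i : ℕ) : Finset (F[X] × ℕ) :=
  i.divisorsAntidiagonal.biUnion fun d => {P ∈ monicOfDegree F d.1 | Irreducible P} ×ˢ {d.2}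

variable {F} {R : Type*} [CommRing R] (Λ : F[X] →* R)

/-- The coefficient of `T ^ k` in the `L`-series `∑ Λ g T ^ deg g` over monic `g`. -/
noncomputable def lCoeff (k : ℕ) : R := ∑ g ∈ monicOfDegree F k, Λ g

/-- The coefficient of `T ^ i` in the logarithmic derivative `T * (d/dT) L / L` of the `L`-series
`L` of `Λ`. -/
noncomputable def primePowerSum (i : ℕ) : R :=
  ∑ Q ∈ monicPrimePowers F i, Q.1.natDegree * Λ Q.1 ^ Q.2

lemma mem_monicOfDegree {k : ℕ} {g : F[X]} :
    g ∈ monicOfDegree F k ↔ g.Monic ∧ g.natDegree = k := by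
  simp [monicOfDegree]

lemma mem_monicPrimePowers {i : ℕ} {Q : F[X] × ℕ} :
    Q ∈ monicPrimePowers F i ↔
      Q.1.Monic ∧ Irreducible Q.1 ∧ Q.1.natDegree * Q.2 = i ∧ i ≠ 0 := by
  simp only [monicPrimePowers, mem_biUnion, Nat.mem_divisorsAntidiagonal, mem_product, mem_filter,
    mem_monicOfDegree, mem_singleton, Prod.exists]
  constructor
  · rintro ⟨d, a, ⟨hda, hi⟩, ⟨⟨hmonic, rfl⟩, hirr⟩, rfl⟩
    exact ⟨hmonic, hirr, hda, hi⟩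
  · rintro ⟨hmonic, hirr, hda, hi⟩
    exact ⟨_, _, ⟨hda, hi⟩, ⟨⟨hmonic, rfl⟩, hirr⟩, rfl⟩

lemma lCoeff_zero : lCoeff Λ 0 = 1 := by
  have hone : monicOfDegree F 0 = {1} := by
    ext g
    rw [mem_monicOfDegree, mem_singleton]
    exact ⟨fun h => h.1.natDegree_eq_zero.1 h.2, by rintro rfl; exact ⟨monic_one, natDegree_one⟩⟩
  rw [lCoeff, hone, sum_singleton, map_one]

lemma natDegree_eq_sum_of_mem_iff_pow_dvd {F : Type*} [Field F] {g : F[X]} (hg : g.Monic)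
    {T : Finset (F[X] × ℕ)}
    (hT : ∀ Q, Q ∈ T ↔ Q.1.Monic ∧ Irreducible Q.1 ∧ Q.2 ≠ 0 ∧ Q.1 ^ Q.2 ∣ g) :
    g.natDegree = ∑ Q ∈ T, Q.1.natDegree := by
  classical
  set s := normalizedFactors g
  have hs : ∀ P, P ∈ s ↔ Irreducible P ∧ P.Monic ∧ P ∣ g := fun P =>
    Polynomial.mem_normalizedFactors_iff hg.ne_zero
  have hTs : ∀ Q : F[X] × ℕ, Q ∈ T ↔ Q.1 ∈ s.toFinset ∧ Q.2 ∈ Icc 1 (s.count Q.1) := fun Q => by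
    rw [hT, Multiset.mem_toFinset, mem_Icc, hs, Nat.one_le_iff_ne_zero]
    constructor
    · rintro ⟨hmonic, hirr, ha, hdvd⟩
      exact ⟨⟨hirr, hmonic, (dvd_pow_self _ ha).trans hdvd⟩, ha,
        (pow_dvd_iff_le_count_normalizedFactors hg hmonic hirr).1 hdvd⟩
    · rintro ⟨⟨hirr, hmonic, -⟩, ha, hle⟩
      exact ⟨hmonic, hirr, ha, (pow_dvd_iff_le_count_normalizedFactors hg hmonic hirr).2 hle⟩
  conv_lhs => rw [← hg.normalize_eq_self, ← prod_normalizedFactors_eq hg.ne_zero,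
    natDegree_multiset_prod_of_monic _ fun P hP => ((hs P).1 hP).2.1, sum_multiset_map_count]
  rw [sum_finset_product T s.toFinset (fun P => Icc 1 (s.count P)) hTs]
  simp [s]

lemma natDegree_eq_sum_monicPrimePowers {g : F[X]} (hg : g.Monic) [DecidablePred (· ∣ g)] :
    g.natDegree = ∑ i ∈ Icc 1 g.natDegree,
      ∑ Q ∈ monicPrimePowers F i with Q.1 ^ Q.2 ∣ g, Q.1.natDegree := by
  classical
  rw [← sum_biUnion]
  · refine natDegree_eq_sum_of_mem_iff_pow_dvd hg fun Q => ?_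
    simp only [mem_biUnion, mem_filter, mem_monicPrimePowers]
    constructor
    · rintro ⟨i, -, ⟨hmonic, hirr, hQi, hi⟩, hdvd⟩
      exact ⟨hmonic, hirr, right_ne_zero_of_mul (hQi ▸ hi), hdvd⟩
    · rintro ⟨hmonic, hirr, ha, hdvd⟩
      have hpos : Q.1.natDegree * Q.2 ≠ 0 := mul_ne_zero hirr.natDegree_pos.ne' ha
      have hle : Q.1.natDegree * Q.2 ≤ g.natDegree := by
        rw [mul_comm, ← natDegree_pow]
        exact natDegree_le_of_dvd hdvd hg.ne_zero
      exact ⟨_, mem_Icc.2 ⟨Nat.one_le_iff_ne_zero.2 hpos, hle⟩, ⟨hmonic, hirr, rfl, hpos⟩, hdvd⟩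
  · refine fun i _ j _ hij => disjoint_left.2 fun Q hQi hQj => hij ?_
    rw [← (mem_monicPrimePowers.1 (mem_filter.1 hQi).1).2.2.1,
      (mem_monicPrimePowers.1 (mem_filter.1 hQj).1).2.2.1]

lemma sum_monicOfDegree_filter_dvd {h : F[X]} (hh : h.Monic) [DecidablePred (h ∣ ·)] {k : ℕ}
    (hk : h.natDegree ≤ k) :
    ∑ g ∈ monicOfDegree F k with h ∣ g, Λ g = Λ h * lCoeff Λ (k - h.natDegree) := by
  rw [lCoeff, mul_sum]
  symm
  refine sum_bij (fun w _ => h * w) (fun w hw => ?_) (fun w _ w' _ => mul_left_cancel₀ hh.ne_zero)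
    (fun g hg => ?_) fun w _ => (map_mul Λ h w).symm
  · obtain ⟨hmonic, hdeg⟩ := mem_monicOfDegree.1 hw
    rw [mem_filter, mem_monicOfDegree, hh.natDegree_mul hmonic, hdeg]
    exact ⟨⟨hh.mul hmonic, by omega⟩, dvd_mul_right _ _⟩
  · rw [mem_filter, mem_monicOfDegree] at hg
    obtain ⟨⟨hmonic, hdeg⟩, w, rfl⟩ := hg
    have hw : w.Monic := hh.of_mul_monic_left hmonic
    rw [hh.natDegree_mul hw] at hdeg
    exact ⟨w, mem_monicOfDegree.2 ⟨hw, by omega⟩, rfl⟩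

-- Compare coefficients in `T * (d/dT) L = (T * (d/dT) L / L) * L`.
lemma natCast_mul_lCoeff_eq_sum (k : ℕ) :
    k * lCoeff Λ k = ∑ i ∈ Icc 1 k, primePowerSum Λ i * lCoeff Λ (k - i) := by
  classical
  have hterm : ∀ g ∈ monicOfDegree F k, k * Λ g = ∑ i ∈ Icc 1 k, ∑ Q ∈ monicPrimePowers F i,
      if Q.1 ^ Q.2 ∣ g then Q.1.natDegree * Λ g else 0 := fun g hg => by
    obtain ⟨hmonic, rfl⟩ := mem_monicOfDegree.1 hg
    conv_lhs => rw [natDegree_eq_sum_monicPrimePowers hmonic]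
    simp only [Nat.cast_sum, sum_mul, sum_filter, Nat.cast_ite, Nat.cast_zero, ite_mul, zero_mul]
  rw [lCoeff, mul_sum, sum_congr rfl hterm, sum_comm]
  refine sum_congr rfl fun i hi => ?_
  rw [sum_comm, primePowerSum, sum_mul]
  refine sum_congr rfl fun Q hQ => ?_
  obtain ⟨hmonic, -, hQi, -⟩ := mem_monicPrimePowers.1 hQ
  have hdeg : (Q.1 ^ Q.2).natDegree = i := by rw [natDegree_pow, mul_comm, hQi]
  rw [← sum_filter, ← mul_sum, sum_monicOfDegree_filter_dvd Λ (hmonic.pow Q.2)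
    (hdeg.trans_le (mem_Icc.1 hi).2), hdeg, map_pow, mul_assoc]

end LFunction

section EvaluationCharacters

open Polynomial

lemma card_filter_minpoly_eq {F K : Type*} [Field F] [Field K] [Finite F] [Fintype K] [Algebra F K]
    [DecidableEq F[X]] {P : F[X]} (hmonic : P.Monic) (hirr : Irreducible P)
    (hdvd : P.natDegree ∣ Module.finrank F K) :
    #{x : K | minpoly F x = P} = P.natDegree := by
  have hsplits : (P.map (algebraMap F K)).Splits := by
    have hX : P ∣ X ^ Fintype.card K - X := by
      rw [Fintype.card_eq_nat_card, Module.natCard_eq_pow_finrank (K := F)]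
      exact hirr.natDegree_dvd_iff_dvd_X_pow_card_pow_sub_X.1 hdvd
    exact Splits.of_dvd (FiniteField.isSplittingField_sub K F).splits
      (map_ne_zero (FiniteField.X_pow_card_sub_X_ne_zero F Fintype.one_lt_card))
      (map_dvd (algebraMap F K) hX)
  rw [← card_rootSet_eq_natDegree (PerfectField.separable_of_irreducible hirr) hsplits,
    ← Set.toFinset_card]
  congr 1
  ext x
  rw [Set.mem_toFinset, mem_rootSet, mem_filter_univ]
  refine ⟨?_, fun h => (minpoly.eq_of_irreducible_of_monic hirr h.2 hmonic).symm⟩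
  rintro rfl
  exact ⟨hmonic.ne_zero, minpoly.aeval F x⟩

lemma primePowerSum_eq_sum_minpoly {F R K : Type*} [Field F] [Finite F] [CommRing R]
    (Λ : F[X] →* R) [Field K] [Fintype K] [Algebra F K] :
    primePowerSum Λ (Module.finrank F K) =
      ∑ x : K, Λ (minpoly F x) ^ (Module.finrank F K / (minpoly F x).natDegree) := by
  classical
  have : FiniteDimensional F K := Module.Finite.of_finite
  have hint : ∀ x : K, IsIntegral F x := Algebra.IsIntegral.isIntegral
  have hmem : ∀ x ∈ (univ : Finset K),
      (minpoly F x, Module.finrank F K / (minpoly F x).natDegree) ∈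
        monicPrimePowers F (Module.finrank F K) := fun x _ =>
    mem_monicPrimePowers.2 ⟨minpoly.monic (hint x), minpoly.irreducible (hint x),
      Nat.mul_div_cancel' (minpoly.degree_dvd (hint x)), Module.finrank_pos.ne'⟩
  rw [primePowerSum, ← sum_fiberwise_of_maps_to hmem]
  refine sum_congr rfl fun Q hQ => ?_
  obtain ⟨hmonic, hirr, hdeg, -⟩ := mem_monicPrimePowers.1 hQ
  have hfiber : ∀ x : K, (minpoly F x, Module.finrank F K / (minpoly F x).natDegree) = Q ↔
      minpoly F x = Q.1 := fun x => by
    rw [Prod.ext_iff, and_iff_left_iff_imp]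
    intro hx
    rw [show minpoly F x = Q.1 from hx, ← hdeg, Nat.mul_div_cancel_left _ hirr.natDegree_pos]
  rw [sum_congr rfl (g := fun _ => Λ Q.1 ^ Q.2) fun x hx => by
      obtain ⟨hP, ha⟩ := Prod.ext_iff.1 (mem_filter.1 hx).2
      rw [← ha, ← hP],
    sum_const, nsmul_eq_mul]
  simp only [hfiber]
  rw [card_filter_minpoly_eq hmonic hirr ⟨Q.2, hdeg.symm⟩]

lemma norm_algebraMap_sub_gen {A B : Type*} [CommRing A] [CommRing B] [Algebra A B]
    (pb : PowerBasis A B) (z : A) :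
    Algebra.norm A (algebraMap A B z - pb.gen) = (minpoly A pb.gen).eval z := by
  rw [Algebra.norm_eq_matrix_det pb.basis, map_sub, AlgHom.commutes, ← charpoly_leftMulMatrix,
    Matrix.eval_charpoly]
  rfl

lemma norm_algebraMap_sub {F K : Type*} [Field F] [Field K] [Algebra F K] [FiniteDimensional F K]
    (z : F) (x : K) : Algebra.norm F (algebraMap F K z - x) =
      (minpoly F x).eval z ^ (Module.finrank F K / (minpoly F x).natDegree) := by
  have hint : IsIntegral F x := Algebra.IsIntegral.isIntegral x
  let E := IntermediateField.adjoin F {x}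
  let pb := IntermediateField.adjoin.powerBasis hint
  have hgen : algebraMap F K z - x = algebraMap E K (algebraMap F E z - pb.gen) := by
    rw [map_sub, ← IsScalarTower.algebraMap_apply, IntermediateField.adjoin.powerBasis_gen]
    rfl
  have hrank : Module.finrank E K = Module.finrank F K / (minpoly F x).natDegree := by
    rw [← Module.finrank_mul_finrank F E K, IntermediateField.adjoin.finrank hint,
      Nat.mul_div_cancel_left _ (minpoly.natDegree_pos hint)]
  rw [← Algebra.norm_norm (S := E), hgen, Algebra.norm_algebraMap, map_pow,
    norm_algebraMap_sub_gen, IntermediateField.adjoin.powerBasis_gen,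
    IntermediateField.minpoly_gen, hrank]

/-- The completely multiplicative function `g ↦ ∏ z ∈ Z, χ (g z) ^ e z` on polynomials, whose
`L`-series carries the character sums `normCharSum χ Z e` over all extensions of `F`. -/
noncomputable def evalChar {F R : Type*} [CommRing F] [CommRing R] (χ : MulChar F R)
    (Z : Finset F) (e : F → ℕ) : F[X] →* R where
  toFun g := ∏ z ∈ Z, χ (g.eval z) ^ e z
  map_one' := by simp
  map_mul' g h := by simp [mul_pow, prod_mul_distrib]

lemma evalChar_apply {F R : Type*} [CommRing F] [CommRing R] (χ : MulChar F R)
    (Z : Finset F) (e : F → ℕ) (g : F[X]) :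
    evalChar χ Z e g = ∏ z ∈ Z, χ (g.eval z) ^ e z := rfl

lemma primePowerSum_evalChar {F : Type*} [Field F] [Finite F] (χ : MulChar F ℂ) (Z : Finset F)
    (e : F → ℕ) (K : Type*) [Field K] [Fintype K] [Algebra F K] :
    primePowerSum (evalChar χ Z e) (Module.finrank F K) = normCharSum χ Z e K := by
  have : FiniteDimensional F K := Module.Finite.of_finite
  rw [primePowerSum_eq_sum_minpoly, normCharSum]
  refine sum_congr rfl fun x _ => ?_
  rw [evalChar_apply, ← prod_pow]
  refine prod_congr rfl fun z _ => ?_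
  rw [norm_algebraMap_sub, map_pow, pow_right_comm]

section Vanishing

variable {F R : Type*} [Field F]

lemma add_C_mul_mem_monicOfDegree [Finite F] {g l : F[X]} {k : ℕ} (hg : g ∈ monicOfDegree F k)
    (hl : l.degree < k) (t : F) : g + C t * l ∈ monicOfDegree F k := by
  obtain ⟨hmonic, hdeg⟩ := mem_monicOfDegree.1 hg
  have hlt : (C t * l).degree < g.degree := by
    rw [degree_eq_natDegree hmonic.ne_zero, hdeg]
    exact (degree_mul_le_of_le degree_C_le le_rfl).trans_lt (by rwa [zero_add])
  exact mem_monicOfDegree.2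
    ⟨hmonic.add_of_left hlt, (natDegree_add_eq_left_of_degree_lt hlt).trans hdeg⟩

/-- Adds a multiple of the Lagrange basis polynomial of `z₀` so that the value at `z₀` is multiplied
by `c` while the values at the other points of `Z` are kept. -/
noncomputable def scaleEval [DecidableEq F] (Z : Finset F) (z₀ c : F) (g : F[X]) : F[X] :=
  g + C ((c - 1) * g.eval z₀) * Lagrange.basis Z id z₀

variable [DecidableEq F] {Z : Finset F} {z₀ : F}

lemma eval_scaleEval_self (hz₀ : z₀ ∈ Z) (c : F) (g : F[X]) :
    (scaleEval Z z₀ c g).eval z₀ = c * g.eval z₀ := by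
  have hbasis : (Lagrange.basis Z id z₀).eval z₀ = 1 :=
    Lagrange.eval_basis_self (v := id) Function.injective_id.injOn hz₀
  simp only [scaleEval, eval_add, eval_mul, eval_C, hbasis]
  ring

lemma eval_scaleEval_of_ne {z : F} (hz : z ∈ Z) (hne : z ≠ z₀) (c : F) (g : F[X]) :
    (scaleEval Z z₀ c g).eval z = g.eval z := by
  have hbasis : (Lagrange.basis Z id z₀).eval z = 0 :=
    Lagrange.eval_basis_of_ne (v := id) hne.symm hz
  simp only [scaleEval, eval_add, eval_mul, hbasis, mul_zero, add_zero]

lemma scaleEval_scaleEval (hz₀ : z₀ ∈ Z) {c c' : F} (hc : c' * c = 1) (g : F[X]) :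
    scaleEval Z z₀ c' (scaleEval Z z₀ c g) = g := by
  rw [scaleEval, eval_scaleEval_self hz₀, scaleEval, add_assoc, ← add_mul, ← C_add,
    show (c - 1) * g.eval z₀ + (c' - 1) * (c * g.eval z₀) = (c' * c - 1) * g.eval z₀ by ring, hc]
  simp

lemma scaleEval_mem_monicOfDegree [Finite F] (hz₀ : z₀ ∈ Z) {k : ℕ} (hk : #Z ≤ k) (c : F)
    {g : F[X]} (hg : g ∈ monicOfDegree F k) : scaleEval Z z₀ c g ∈ monicOfDegree F k := by
  refine add_C_mul_mem_monicOfDegree hg ?_ _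
  have hpos : 0 < #Z := card_pos.2 ⟨z₀, hz₀⟩
  rw [Lagrange.degree_basis Function.injective_id.injOn hz₀]
  exact_mod_cast (by omega : #Z - 1 < k)

lemma evalChar_scaleEval [CommRing R] (χ : MulChar F R) (e : F → ℕ) (hz₀ : z₀ ∈ Z) (c : F)
    (g : F[X]) : evalChar χ Z e (scaleEval Z z₀ c g) = χ c ^ e z₀ * evalChar χ Z e g := by
  rw [evalChar_apply, evalChar_apply, ← mul_prod_erase _ _ hz₀, ← mul_prod_erase _ _ hz₀,
    ← mul_assoc, eval_scaleEval_self hz₀, map_mul, mul_pow]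
  congr 1
  refine prod_congr rfl fun z hz => ?_
  obtain ⟨hne, hzZ⟩ := mem_erase.1 hz
  rw [eval_scaleEval_of_ne hzZ hne]

end Vanishing

lemma lCoeff_evalChar_eq_zero {F R : Type*} [Field F] [Finite F] [CommRing R] [NoZeroDivisors R]
    {χ : MulChar F R} {Z : Finset F} {e : F → ℕ} {z₀ : F} (hz₀ : z₀ ∈ Z) (hχ : χ ^ e z₀ ≠ 1)
    {k : ℕ} (hk : #Z ≤ k) : lCoeff (evalChar χ Z e) k = 0 := by
  classical
  obtain ⟨c, hc₀, hc⟩ := exists_mulChar_pow_ne_one hχ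
  have hscale : lCoeff (evalChar χ Z e) k = χ c ^ e z₀ * lCoeff (evalChar χ Z e) k := by
    rw [lCoeff, mul_sum]
    refine (sum_bij' (fun g _ => scaleEval Z z₀ c⁻¹ g) (fun g _ => scaleEval Z z₀ c g)
      (fun g => scaleEval_mem_monicOfDegree hz₀ hk c⁻¹)
      (fun g => scaleEval_mem_monicOfDegree hz₀ hk c)
      (fun g _ => scaleEval_scaleEval hz₀ (mul_inv_cancel₀ hc₀) g)
      (fun g _ => scaleEval_scaleEval hz₀ (inv_mul_cancel₀ hc₀) g) fun g _ => ?_)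
    rw [← evalChar_scaleEval χ e hz₀, scaleEval_scaleEval hz₀ (mul_inv_cancel₀ hc₀)]
  have hzero : (1 - χ c ^ e z₀) * lCoeff (evalChar χ Z e) k = 0 := by
    rw [sub_mul, one_mul, ← hscale, sub_self]
  exact (mul_eq_zero.1 hzero).resolve_left (sub_ne_zero.2 hc.symm)

end EvaluationCharacters

section PowerSums

open Polynomial

lemma eq_of_newton_recurrence {R : Type*} [CommRing R] {c s s' : ℕ → R} (hc : c 0 = 1)
    (hs : ∀ k : ℕ, k * c k = ∑ i ∈ Icc 1 k, s i * c (k - i))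
    (hs' : ∀ k : ℕ, k * c k = ∑ i ∈ Icc 1 k, s' i * c (k - i)) {k : ℕ} (hk : 1 ≤ k) :
    s k = s' k := by
  induction k using Nat.strong_induction_on with
  | _ k ih =>
    have hlower : ∑ i ∈ (Icc 1 k).erase k, s i * c (k - i) =
        ∑ i ∈ (Icc 1 k).erase k, s' i * c (k - i) := sum_congr rfl fun i hi => by
      obtain ⟨hik, hi⟩ := mem_erase.1 hi
      rw [mem_Icc] at hi
      rw [ih i (by omega) hi.1]
    have hkk := (hs k).symm.trans (hs' k)
    have hmem : k ∈ Icc 1 k := mem_Icc.2 ⟨hk, le_rfl⟩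
    rw [← add_sum_erase _ _ hmem, ← add_sum_erase _ _ hmem, hlower, Nat.sub_self, hc] at hkk
    simpa using hkk

lemma natCast_mul_neg_one_pow_mul_esymm {σ R : Type*} [Fintype σ] [CommRing R] {ω : σ → R}
    {c : ℕ → R} (hc : ∀ k, c k = (-1) ^ k * (univ.val.map ω).esymm k) (k : ℕ) :
    k * c k = ∑ i ∈ Icc 1 k, (-∑ j, ω j ^ i) * c (k - i) := by
  classical
  have hnewton := congrArg (MvPolynomial.aeval ω) (MvPolynomial.mul_esymm_eq_sum σ R k)
  simp only [map_mul, map_sum, map_pow, map_neg, map_one, map_natCast, MvPolynomial.psum,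
    MvPolynomial.aeval_X, MvPolynomial.aeval_esymm_eq_multiset_esymm] at hnewton
  have hsign : (-1 : R) ^ k * (-1) ^ (k + 1) = -1 := by
    rw [← pow_add, show k + (k + 1) = 2 * k + 1 by ring, pow_succ, pow_mul]
    simp
  rw [hc, mul_left_comm, hnewton, ← mul_assoc, hsign, mul_sum]
  refine sum_bij' (fun a _ => a.2) (fun i _ => (k - i, i)) ?_ ?_ ?_ (fun _ _ => rfl) ?_
  · rintro ⟨a, b⟩ h
    simp only [mem_filter, HasAntidiagonal.mem_antidiagonal, mem_Icc] at h ⊢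
    omega
  · intro i h
    simp only [mem_filter, HasAntidiagonal.mem_antidiagonal, mem_Icc] at h ⊢
    omega
  · rintro ⟨a, b⟩ h
    simp only [mem_filter, HasAntidiagonal.mem_antidiagonal] at h
    simp only [Prod.mk.injEq, and_true]
    omega
  · rintro ⟨a, b⟩ h
    simp only [mem_filter, HasAntidiagonal.mem_antidiagonal] at h
    rw [show k - b = a by omega, hc a]
    ring

lemma exists_fin_map_eq {α : Type*} {s : Multiset α} {D : ℕ} (hs : s.card = D) :
    ∃ ω : Fin D → α, univ.val.map ω = s := by
  subst hs
  induction s using Quot.inductionOn with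
  | h l => exact ⟨l.get, (Fin.univ_val_map l.get).trans (congrArg _ (List.ofFn_get l))⟩

-- The `ω j` are the inverse roots of the polynomial `∑ c k T ^ k`.
lemma exists_eq_neg_one_pow_mul_esymm {K : Type*} [Field K] [IsAlgClosed K] {D : ℕ} {c : ℕ → K}
    (hc : c 0 = 1) (hD : ∀ k, D < k → c k = 0) :
    ∃ ω : Fin D → K, ∀ k, c k = (-1) ^ k * (univ.val.map ω).esymm k := by
  set Q : K[X] := ∑ k ∈ range (D + 1), C (c (D - k)) * X ^ k with hQ
  have hcoeff : ∀ k, Q.coeff k = if k ≤ D then c (D - k) else 0 := fun k => by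
    simp only [hQ, finsetSum_coeff, coeff_C_mul, coeff_X_pow, mul_ite, mul_one, mul_zero,
      sum_ite_eq, mem_range, Nat.lt_succ_iff]
  have hcoeffD : Q.coeff D = 1 := by rw [hcoeff, if_pos le_rfl, Nat.sub_self, hc]
  have hdeg : Q.natDegree = D := by
    refine natDegree_eq_of_le_of_coeff_ne_zero ?_ (hcoeffD.trans_ne one_ne_zero)
    exact natDegree_le_iff_coeff_eq_zero.2 fun k hk => by rw [hcoeff, if_neg (by omega)]
  have hroots : Q.roots.card = Q.natDegree := (IsAlgClosed.splits Q).natDegree_eq_card_roots.symm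
  obtain ⟨ω, hω⟩ := exists_fin_map_eq (hroots.trans hdeg)
  refine ⟨ω, fun k => ?_⟩
  rw [hω]
  rcases le_or_gt k D with hk | hk
  · have hvieta := coeff_eq_esymm_roots_of_card hroots (k := D - k) (by omega)
    rwa [leadingCoeff, hdeg, hcoeffD, hcoeff, if_pos (by omega), one_mul, Nat.sub_sub_self hk]
      at hvieta
  · rw [hD k hk, Multiset.esymm, Multiset.powersetCard_eq_empty _ (by omega)]
    simp

lemma exists_eq_neg_sum_pow_of_newton_recurrence {K : Type*} [Field K] [IsAlgClosed K] {D : ℕ}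
    {c s : ℕ → K} (hc : c 0 = 1) (hD : ∀ k, D < k → c k = 0)
    (hs : ∀ k : ℕ, k * c k = ∑ i ∈ Icc 1 k, s i * c (k - i)) :
    ∃ ω : Fin D → K, ∀ k, 1 ≤ k → s k = -∑ j, ω j ^ k := by
  obtain ⟨ω, hω⟩ := exists_eq_neg_one_pow_mul_esymm hc hD
  exact ⟨ω, fun k => eq_of_newton_recurrence hc hs (natCast_mul_neg_one_pow_mul_esymm hω)⟩

-- Recurrence of `1` in the compact group `Circle ^ ι`.
lemma frequently_forall_half_lt_re_pow {ι : Type*} [Finite ι] (u : ι → Circle) :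
    ∃ᶠ k : ℕ in Filter.atTop, ∀ j, 1 / 2 < ((u j : ℂ) ^ k).re := by
  have hopen : IsOpen {v : ι → Circle | ∀ j, 1 / 2 < (v j : ℂ).re} := by
    rw [Set.ofPred_forall]
    exact isOpen_iInter_of_finite fun j => isOpen_lt continuous_const
      (Complex.continuous_re.comp (continuous_subtype_val.comp (continuous_apply j)))
  have hone : (1 : ι → Circle) ∈ {v : ι → Circle | ∀ j, 1 / 2 < (v j : ℂ).re} := fun _ => by
    norm_num
  simpa using (mapClusterPt_one_atTop_pow u).frequently (hopen.mem_nhds hone)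

lemma frequently_half_norm_pow_le_norm_sum_pow {ι : Type*} [Fintype ι] (α : ι → ℂ) (j : ι) :
    ∃ᶠ k : ℕ in Filter.atTop, 1 / 2 * ‖α j‖ ^ k ≤ ‖∑ i, α i ^ k‖ := by
  refine (frequently_forall_half_lt_re_pow fun i => Circle.exp (α i).arg).mono fun k hk => ?_
  have hre : (∑ i, α i ^ k).re = ∑ i, ‖α i‖ ^ k * ((Circle.exp (α i).arg : ℂ) ^ k).re := by
    rw [Complex.re_sum]
    refine sum_congr rfl fun i _ => ?_
    conv_lhs => rw [← Complex.norm_mul_exp_arg_mul_I (α i)]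
    rw [mul_pow, ← Complex.ofReal_pow, Complex.re_ofReal_mul, Circle.coe_exp]
  have hnonneg : ∀ i ∈ univ, 0 ≤ ‖α i‖ ^ k * ((Circle.exp (α i).arg : ℂ) ^ k).re := fun i _ =>
    mul_nonneg (by positivity) (by linarith [hk i])
  calc 1 / 2 * ‖α j‖ ^ k ≤ ‖α j‖ ^ k * ((Circle.exp (α j).arg : ℂ) ^ k).re := by
        rw [mul_comm]
        exact mul_le_mul_of_nonneg_left (hk j).le (by positivity)
    _ ≤ (∑ i, α i ^ k).re := hre ▸ single_le_sum hnonneg (mem_univ j)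
    _ ≤ ‖∑ i, α i ^ k‖ := Complex.re_le_norm _

lemma norm_le_of_norm_sum_pow_le {ι : Type*} [Fintype ι] {α : ι → ℂ} {q R : ℝ} (hq : 0 < q)
    (h : ∀ᶠ k : ℕ in Filter.atTop, ‖∑ i, α i ^ k‖ ≤ R * q ^ k) (j : ι) : ‖α j‖ ≤ q := by
  by_contra! hj
  have hgrow : ∀ᶠ k : ℕ in Filter.atTop, R * q ^ k < 1 / 2 * ‖α j‖ ^ k := by
    filter_upwards [(tendsto_pow_atTop_atTop_of_one_lt
      ((one_lt_div hq).2 hj)).eventually_gt_atTop (2 * R)] with k hk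
    rw [div_pow, lt_div_iff₀ (by positivity)] at hk
    linarith
  obtain ⟨k, hle, hlt, hub⟩ :=
    ((frequently_half_norm_pow_le_norm_sum_pow α j).and_eventually (hgrow.and h)).exists
  linarith

end PowerSums

section Weil

variable {F : Type*} [Field F] [Fintype F] {χ : MulChar F ℂ} {Z : Finset F} {e : F → ℕ} {z₀ : F}

lemma exists_primePowerSum_evalChar_eq_neg_sum_pow {F : Type*} [Field F] [Finite F]
    {χ : MulChar F ℂ} {Z : Finset F} {e : F → ℕ} {z₀ : F} (hz₀ : z₀ ∈ Z) (hχ : χ ^ e z₀ ≠ 1) :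
    ∃ ω : Fin (#Z - 1) → ℂ, ∀ k, 1 ≤ k → primePowerSum (evalChar χ Z e) k = -∑ j, ω j ^ k :=
  exists_eq_neg_sum_pow_of_newton_recurrence (lCoeff_zero _)
    (fun _ hk => lCoeff_evalChar_eq_zero hz₀ hχ (by omega)) (natCast_mul_lCoeff_eq_sum _)

lemma eventually_norm_primePowerSum_evalChar_le (hz₀ : z₀ ∈ Z) (hχ : χ ^ e z₀ ≠ 1) (hZ : 0 ∉ Z) :
    ∃ R : ℝ, ∀ᶠ k : ℕ in Filter.atTop,
      ‖primePowerSum (evalChar χ Z e) (2 * k)‖ ≤ R * Fintype.card F ^ k := by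
  obtain ⟨R, M₀, hR⟩ := exists_norm_normCharSum_le hz₀ hχ hZ
  obtain ⟨p, hp⟩ := CharP.exists F
  have : Fact p.Prime := ⟨CharP.char_is_prime F p⟩
  refine ⟨R, ?_⟩
  filter_upwards [Filter.eventually_ge_atTop (M₀ + 1)] with k hk
  have : NeZero (2 * k) := ⟨by omega⟩
  have := Fintype.ofFinite (FiniteField.Extension F p (2 * k))
  have hcard : Fintype.card (FiniteField.Extension F p (2 * k)) = (Fintype.card F ^ k) ^ 2 := by
    rw [← Nat.card_eq_fintype_card, FiniteField.natCard_extension, Nat.card_eq_fintype_card,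
      mul_comm, pow_mul]
  have hkpow : k ≤ Fintype.card F ^ k := (Nat.lt_pow_self Fintype.one_lt_card).le
  have hle := hR (FiniteField.Extension F p (2 * k)) k hcard (by omega)
  rwa [← primePowerSum_evalChar, FiniteField.finrank_extension] at hle

lemma norm_normCharSum_self_le (hz₀ : z₀ ∈ Z) (hχ : χ ^ e z₀ ≠ 1) (hZ : 0 ∉ Z) :
    ‖normCharSum χ Z e F‖ ≤ (#Z - 1) * √(Fintype.card F) := by
  obtain ⟨ω, hω⟩ := exists_primePowerSum_evalChar_eq_neg_sum_pow hz₀ hχ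
  obtain ⟨R, hR⟩ := eventually_norm_primePowerSum_evalChar_le hz₀ hχ hZ
  have hsum : ∀ᶠ k : ℕ in Filter.atTop, ‖∑ j, (ω j ^ 2) ^ k‖ ≤ R * (Fintype.card F : ℝ) ^ k := by
    filter_upwards [hR, Filter.eventually_ge_atTop 1] with k hk hk1
    simpa only [hω (2 * k) (by omega), norm_neg, pow_mul] using hk
  have hωle : ∀ j, ‖ω j‖ ≤ √(Fintype.card F) := fun j => by
    refine Real.le_sqrt_of_sq_le ?_
    rw [← norm_pow]
    exact norm_le_of_norm_sum_pow_le (by exact_mod_cast Fintype.card_pos) hsum j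
  have hcard : ((#Z - 1 : ℕ) : ℝ) = #Z - 1 := Nat.cast_pred (card_pos.2 ⟨z₀, hz₀⟩)
  calc ‖normCharSum χ Z e F‖ = ‖∑ j, ω j‖ := by
        rw [← primePowerSum_evalChar, Module.finrank_self, hω 1 le_rfl, norm_neg]
        simp only [pow_one]
    _ ≤ ∑ _j : Fin (#Z - 1), √(Fintype.card F) := norm_sum_le_of_le _ fun j _ => hωle j
    _ = (#Z - 1) * √(Fintype.card F) := by simp [hcard]

lemma two_lt_card_of_mulChar_pow_ne_one {R : Type*} [CommMonoidWithZero R] {χ : MulChar F R} {n : ℕ}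
    (hχ : χ ^ n ≠ 1) : 2 < Fintype.card F := by
  obtain ⟨c, hc₀, hc⟩ := exists_mulChar_pow_ne_one hχ
  refine Fintype.two_lt_card_iff.2 ⟨0, 1, c, zero_ne_one, hc₀.symm, ?_⟩
  rintro rfl
  simp at hc

lemma norm_prod_mulChar_pow_le_one {F ι : Type*} [Field F] [Finite F] (χ : MulChar F ℂ)
    (s : Finset ι) (v : ι → F) (m : ι → ℕ) : ‖∏ i ∈ s, χ (v i) ^ m i‖ ≤ 1 := by
  rw [norm_prod]
  refine prod_le_one (fun _ _ => norm_nonneg _) fun i _ => ?_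
  rw [norm_pow]
  exact pow_le_one₀ (norm_nonneg _) (norm_mulChar_apply_le_one χ _)

-- Translating by `w` moves a point outside `Z` to `0`; each `χ (x - z)` differs from `χ (z - x)` by
-- the unimodular factor `χ (-1)`.
lemma norm_normCharSum_image_sub [DecidableEq F] (χ : MulChar F ℂ) (Z : Finset F) (e : F → ℕ)
    (w : F) : ‖normCharSum χ (Z.image (· - w)) (fun z => e (z + w)) F‖ =
      ‖∑ x, ∏ z ∈ Z, χ (x - z) ^ e z‖ := by
  have htranslate : normCharSum χ (Z.image (· - w)) (fun z => e (z + w)) F =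
      (∏ z ∈ Z, χ (-1) ^ e z) * ∑ x, ∏ z ∈ Z, χ (x - z) ^ e z := by
    rw [normCharSum, mul_sum, ← Equiv.sum_comp (Equiv.subRight w)]
    refine sum_congr rfl fun x _ => ?_
    rw [prod_image sub_left_injective.injOn, ← prod_mul_distrib]
    refine prod_congr rfl fun z _ => ?_
    rw [← mul_pow, ← map_mul]
    simp
  rw [htranslate, norm_mul, norm_prod]
  simp [norm_mulChar_apply_of_ne_zero]

theorem norm_sum_prod_mulChar_pow_le (hz₀ : z₀ ∈ Z) (hχ : χ ^ e z₀ ≠ 1) :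
    ‖∑ x, ∏ z ∈ Z, χ (x - z) ^ e z‖ ≤ (#Z - 1) * √(Fintype.card F) := by
  classical
  by_cases hZ : ∃ w, w ∉ Z
  · obtain ⟨w, hw⟩ := hZ
    rw [← norm_normCharSum_image_sub χ Z e w,
      ← card_image_of_injective Z (sub_left_injective (b := w))]
    refine norm_normCharSum_self_le (mem_image_of_mem _ hz₀) (by simpa using hχ) ?_
    rintro h
    obtain ⟨z, hz, hzw⟩ := mem_image.1 h
    exact hw (sub_eq_zero.1 hzw ▸ hz)
  · have hq : (3 : ℝ) ≤ Fintype.card F := by exact_mod_cast two_lt_card_of_mulChar_pow_ne_one hχ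
    have hsq : √(Fintype.card F : ℝ) * √(Fintype.card F) = Fintype.card F :=
      Real.mul_self_sqrt (by positivity)
    have hsqrt : (3 / 2 : ℝ) ≤ √(Fintype.card F) := Real.le_sqrt_of_sq_le (by linarith)
    calc ‖∑ x, ∏ z ∈ Z, χ (x - z) ^ e z‖ ≤ ∑ _x : F, (1 : ℝ) :=
          norm_sum_le_of_le _ fun x _ => norm_prod_mulChar_pow_le_one χ Z (x - ·) e
      _ = Fintype.card F := by simp
      _ ≤ (Fintype.card F - 1) * √(Fintype.card F) := by nlinarith [hq, hsq, hsqrt]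
      _ = (#Z - 1) * √(Fintype.card F) := by
        rw [show Z = univ from eq_univ_iff_forall.2 (by simpa using hZ), card_univ]

end Weil

section Combinatorics

variable {ι α : Type*} [Fintype ι]

-- `σ` is injective on a smallest set meeting every forward orbit and moves it off itself.
lemma exists_forall_iterate_mem_two_mul_card_le {σ : ι → ι} (hσ : ∀ i, σ i ≠ i) :
    ∃ R : Finset ι, 2 * #R ≤ Fintype.card ι ∧ ∀ i, ∃ n : ℕ, σ^[n] i ∈ R := by
  classical
  have hne : ({R : Finset ι | ∀ i, ∃ n : ℕ, σ^[n] i ∈ R} : Finset _).Nonempty :=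
    ⟨univ, by simp⟩
  obtain ⟨R, hR, hmin⟩ := exists_min_image _ card hne
  simp only [mem_filter_univ] at hR hmin
  have hreach : ∀ i ∈ R, ∀ n, σ^[n] i ∈ R → σ^[n] i = i := by
    intro i hi n hn
    by_contra hne
    refine (card_erase_lt_of_mem hi).not_ge (hmin _ fun x => ?_)
    obtain ⟨m, hm⟩ := hR x
    by_cases hx : σ^[m] x = i
    · exact ⟨n + m, by rw [Function.iterate_add_apply, hx]; exact mem_erase.2 ⟨hne, hn⟩⟩
    · exact ⟨m, mem_erase.2 ⟨hx, hm⟩⟩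
  have hinj : Set.InjOn σ R := by
    intro i hi j hj hij
    obtain ⟨n, hn⟩ := hR (σ i)
    have hi' := hreach i hi (n + 1) (by rwa [Function.iterate_succ_apply])
    have hj' := hreach j hj (n + 1) (by rwa [Function.iterate_succ_apply, ← hij])
    rw [← hi', ← hj', Function.iterate_succ_apply, Function.iterate_succ_apply, hij]
  have hdisj : Disjoint R (R.image σ) := by
    refine disjoint_left.2 fun i hi hi' => ?_
    obtain ⟨j, hj, rfl⟩ := mem_image.1 hi'
    exact hσ j (hreach j hj 1 hi)
  have hcard := card_le_univ (R ∪ R.image σ)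
  rw [card_union_of_disjoint hdisj, card_image_of_injOn hinj] at hcard
  exact ⟨R, by omega, hR⟩

variable [DecidableEq ι] {T : Finset α}

lemma card_filter_forall_eq_apply_le [DecidableEq α] (hT : T.Nonempty) (f : ι → α → α) {σ : ι → ι}
    (hσ : ∀ i, σ i ≠ i) :
    #{u ∈ Fintype.piFinset fun _ : ι => T | ∀ i, u i = f i (u (σ i))} ≤
      #T ^ (Fintype.card ι / 2) := by
  obtain ⟨R, hRcard, hR⟩ := exists_forall_iterate_mem_two_mul_card_le hσ
  calc _ ≤ #(Fintype.piFinset fun _ : R => T) := by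
        refine card_le_card_of_injOn (fun u i => u i) ?_ ?_
        · intro u hu
          exact Fintype.mem_piFinset.2 fun i => Fintype.mem_piFinset.1 (mem_filter.1 hu).1 i
        · intro u hu v hv huv
          have hagree : ∀ n i, σ^[n] i ∈ R → u i = v i := by
            intro n
            induction n with
            | zero => exact fun i hi => congrFun huv ⟨i, hi⟩
            | succ n ih =>
              intro i hi
              rw [(mem_filter.1 hu).2 i, (mem_filter.1 hv).2 i,
                ih _ (by rwa [Function.iterate_succ_apply] at hi)]
          exact funext fun i => (hR i).elim fun n hn => hagree n i hn
    _ = #T ^ #R := by simp [Fintype.card_piFinset]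
    _ ≤ #T ^ (Fintype.card ι / 2) := Nat.pow_le_pow_right hT.card_pos (by omega)

/-- Every entry of the tuple `u` coincides with another entry or with the image under `A` of another
entry; for the remaining tuples Weil's bound applies to the attached character sum. -/
def EveryEntryMatched {ι α : Type*} (A : α → α) (u : ι → α) : Prop :=
  ∀ i, ∃ j, j ≠ i ∧ (u j = u i ∨ A (u j) = u i)

open Classical in
lemma card_filter_everyEntryMatched_le (hT : T.Nonempty) (A : α → α) :
    #{u ∈ Fintype.piFinset fun _ : ι => T | EveryEntryMatched A u} ≤
      (2 * Fintype.card ι) ^ Fintype.card ι * #T ^ (Fintype.card ι / 2) := by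
  set I : Finset ((ι → ι) × (ι → Bool)) := {p | ∀ i, p.1 i ≠ i}
  set link : Bool → α → α := fun t => if t then A else id with hlink
  have hcover : {u ∈ Fintype.piFinset fun _ : ι => T | EveryEntryMatched A u} ⊆
      I.biUnion fun p => {u ∈ Fintype.piFinset fun _ : ι => T |
        ∀ i, u i = link (p.2 i) (u (p.1 i))} := by
    intro u hu
    obtain ⟨huT, hmatch⟩ := mem_filter.1 hu
    choose σ hσ hσu using hmatch
    refine mem_biUnion.2 ⟨(σ, fun i => decide (A (u (σ i)) = u i)),
      mem_filter.2 ⟨mem_univ _, hσ⟩, mem_filter.2 ⟨huT, fun i => ?_⟩⟩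
    by_cases h : A (u (σ i)) = u i
    · simp [hlink, h]
    · simpa [hlink, h] using ((hσu i).resolve_right h).symm
  have hI : #I ≤ (2 * Fintype.card ι) ^ Fintype.card ι := by
    refine (card_le_univ I).trans_eq ?_
    rw [Fintype.card_prod, Fintype.card_fun, Fintype.card_fun, Fintype.card_bool, ← mul_pow,
      mul_comm]
  refine (card_le_card hcover).trans ((card_biUnion_le_card_mul _ _ _ fun p hp => ?_).trans
    (Nat.mul_le_mul_right _ hI))
  exact card_filter_forall_eq_apply_le hT (fun i => link (p.2 i)) (mem_filter.1 hp).2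

end Combinatorics

section Moments

open scoped ComplexConjugate

lemma ofReal_norm_sum_pow_two_mul {Y : Type*} (T : Finset Y) (g : Y → ℂ) (r : ℕ) :
    ((‖∑ y ∈ T, g y‖ ^ (2 * r) : ℝ) : ℂ) =
      ∑ u ∈ Fintype.piFinset fun _ : Fin r ⊕ Fin r => T,
        (∏ i, g (u (.inl i))) * ∏ i, conj (g (u (.inr i))) := by
  have hpow : ((‖∑ y ∈ T, g y‖ ^ (2 * r) : ℝ) : ℂ) =
      ∏ i : Fin r ⊕ Fin r, ∑ y ∈ T, Sum.elim (fun _ => g) (fun _ y => conj (g y)) i y := by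
    simp only [Fintype.prod_sum_type, Sum.elim_inl, Sum.elim_inr, prod_const, card_univ,
      Fintype.card_fin]
    rw [← map_sum, ← mul_pow, Complex.mul_conj, Complex.normSq_eq_norm_sq, pow_mul]
    push_cast
    rfl
  rw [hpow, prod_univ_sum]
  simp only [Fintype.prod_sum_type, Sum.elim_inl, Sum.elim_inr]

lemma sum_norm_sum_pow_two_mul_le {X Y : Type*} [Fintype X] (T : Finset Y) {c : Y → ℂ}
    (hc : ∀ y, ‖c y‖ ≤ 1) (f : Y → X → ℂ) (r : ℕ) :
    ∑ s, ‖∑ y ∈ T, c y * f y s‖ ^ (2 * r) ≤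
      ∑ u ∈ Fintype.piFinset fun _ : Fin r ⊕ Fin r => T,
        ‖∑ s, (∏ i, f (u (.inl i)) s) * ∏ i, conj (f (u (.inr i)) s)‖ := by
  have hexpand : ((∑ s, ‖∑ y ∈ T, c y * f y s‖ ^ (2 * r) : ℝ) : ℂ) =
      ∑ u ∈ Fintype.piFinset fun _ : Fin r ⊕ Fin r => T,
        ((∏ i, c (u (.inl i))) * ∏ i, conj (c (u (.inr i)))) *
          ∑ s, (∏ i, f (u (.inl i)) s) * ∏ i, conj (f (u (.inr i)) s) := by
    simp only [Complex.ofReal_sum, ofReal_norm_sum_pow_two_mul, map_mul, prod_mul_distrib, mul_sum]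
    rw [sum_comm]
    exact sum_congr rfl fun u _ => sum_congr rfl fun s _ => by ring
  have hcoeff : ∀ u : Fin r ⊕ Fin r → Y,
      ‖(∏ i, c (u (.inl i))) * ∏ i, conj (c (u (.inr i)))‖ ≤ 1 := fun u => by
    simp only [norm_mul, norm_prod, RCLike.norm_conj]
    exact mul_le_one₀ (prod_le_one (fun _ _ => norm_nonneg _) fun _ _ => hc _)
      (prod_nonneg fun _ _ => norm_nonneg _)
      (prod_le_one (fun _ _ => norm_nonneg _) fun _ _ => hc _)
  rw [← Complex.norm_of_nonneg (sum_nonneg fun s _ => by positivity), hexpand]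
  refine norm_sum_le_of_le _ fun u _ => ?_
  rw [norm_mul]
  exact mul_le_of_le_one_left (norm_nonneg _) (hcoeff u)

lemma exists_sum_norm_sum_le {X Y : Type*} (S : Finset X) (T : Finset Y) (f : Y → X → ℂ) :
    ∃ c : Y → ℂ, (∀ y, ‖c y‖ = 1) ∧
      ∑ y ∈ T, ‖∑ s ∈ S, f y s‖ ≤ ∑ s ∈ S, ‖∑ y ∈ T, c y * f y s‖ := by
  choose c hc hcf using fun y => Complex.exists_norm_eq_mul_self (∑ s ∈ S, f y s)
  have hlinear : ((∑ y ∈ T, ‖∑ s ∈ S, f y s‖ : ℝ) : ℂ) = ∑ s ∈ S, ∑ y ∈ T, c y * f y s := by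
    simp only [Complex.ofReal_sum, hcf, mul_sum]
    exact sum_comm
  refine ⟨c, hc, ?_⟩
  rw [← Complex.norm_of_nonneg (sum_nonneg fun y _ => norm_nonneg _), hlinear]
  exact norm_sum_le _ _

-- Linearise the absolute values by unimodular weights, then apply Hölder over `S`.
lemma pow_sum_norm_sum_le {X Y : Type*} [Fintype X] {S : Finset X} (hS : S.Nonempty)
    (T : Finset Y) (f : Y → X → ℂ) {r : ℕ} (hr : 1 ≤ r) :
    (∑ y ∈ T, ‖∑ s ∈ S, f y s‖) ^ (2 * r) ≤ #S ^ (2 * r - 1) *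
      ∑ u ∈ Fintype.piFinset fun _ : Fin r ⊕ Fin r => T,
        ‖∑ s, (∏ i, f (u (.inl i)) s) * ∏ i, conj (f (u (.inr i)) s)‖ := by
  obtain ⟨c, hc, hle⟩ := exists_sum_norm_sum_le S T f
  calc (∑ y ∈ T, ‖∑ s ∈ S, f y s‖) ^ (2 * r)
      ≤ (∑ s ∈ S, ‖∑ y ∈ T, c y * f y s‖) ^ (2 * r) := by gcongr
    _ ≤ #S ^ (2 * r - 1) * ∑ s ∈ S, ‖∑ y ∈ T, c y * f y s‖ ^ (2 * r) := by
        have hmean := pow_sum_div_card_le_sum_pow (s := S)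
          (f := fun s => ‖∑ y ∈ T, c y * f y s‖) (fun _ _ => norm_nonneg _) (2 * r - 1)
        rwa [div_le_iff₀' (by have := hS.card_pos; positivity), Nat.sub_add_cancel (by omega)]
          at hmean
    _ ≤ #S ^ (2 * r - 1) * ∑ s, ‖∑ y ∈ T, c y * f y s‖ ^ (2 * r) := by
        gcongr
        exact subset_univ S
    _ ≤ _ := by gcongr; exact sum_norm_sum_pow_two_mul_le T (fun y => (hc y).le) f r

end Moments

section CharacterCorrelations

open scoped ComplexConjugate

variable {F : Type*} [Field F] [Fintype F]

lemma norm_sum_prod_mulChar_add_pow_le {κ : Type*} [Fintype κ] {χ : MulChar F ℂ} {w : κ → F}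
    {m : κ → ℕ} {k₀ : κ} (hw : ∀ k, k ≠ k₀ → w k ≠ w k₀) (hχ : χ ^ m k₀ ≠ 1) :
    ‖∑ s, ∏ k, χ (s + w k) ^ m k‖ ≤ (Fintype.card κ - 1) * √(Fintype.card F) := by
  classical
  set Z : Finset F := univ.image fun k => -w k
  set e : F → ℕ := fun z => ∑ k with -w k = z, m k with he
  have hfiber : ({k | -w k = -w k₀} : Finset κ) = {k₀} := by
    ext k
    simp only [mem_filter_univ, mem_singleton, neg_inj]
    exact ⟨not_imp_not.1 (hw k), congrArg w⟩
  have hprod : ∀ s, ∏ z ∈ Z, χ (s - z) ^ e z = ∏ k, χ (s + w k) ^ m k := fun s => by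
    rw [← prod_fiberwise_of_maps_to fun k _ => mem_image_of_mem (fun k => -w k) (mem_univ k)]
    refine prod_congr rfl fun z _ => ?_
    rw [he, ← prod_pow_eq_pow_sum]
    refine prod_congr rfl fun k hk => ?_
    rw [← (mem_filter.1 hk).2, sub_neg_eq_add]
  have hZ : (#Z : ℝ) ≤ Fintype.card κ := by exact_mod_cast card_image_le
  simp only [← hprod]
  refine (norm_sum_prod_mulChar_pow_le (mem_image_of_mem _ (mem_univ k₀)) ?_).trans (by gcongr)
  change χ ^ ∑ k with -w k = -w k₀, m k ≠ 1
  rwa [hfiber, sum_singleton]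

lemma conj_mulChar_apply (hF : 2 < Fintype.card F) (χ : MulChar F ℂ) (x : F) :
    conj (χ x) = χ x ^ (Fintype.card F - 2) := by
  rcases eq_or_ne x 0 with rfl | hx
  · rw [MulChar.map_zero, zero_pow (by omega), map_zero]
  · rw [← Complex.inv_eq_conj (norm_mulChar_apply_of_ne_zero χ hx), inv_eq_iff_eq_inv]
    refine eq_inv_of_mul_eq_one_right ?_
    rw [← pow_succ, ← map_pow, show Fintype.card F - 2 + 1 = Fintype.card F - 1 by omega,
      FiniteField.pow_card_sub_one_eq_one x hx, map_one]

lemma mulChar_pow_mul_card_sub_two_ne_one {R : Type*} [CommMonoidWithZero R] {χ : MulChar F R}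
    {a : ℕ} (hχ : χ ^ a ≠ 1) : χ ^ (a * (Fintype.card F - 2)) ≠ 1 := by
  classical
  have hF := two_lt_card_of_mulChar_pow_ne_one hχ
  have hone : χ ^ (Fintype.card F - 1) = 1 := by
    rw [← Fintype.card_units, χ.pow_card_eq_one]
  intro h
  refine hχ ?_
  calc χ ^ a = χ ^ (a * (Fintype.card F - 2)) * χ ^ a := by rw [h, one_mul]
    _ = (χ ^ (Fintype.card F - 1)) ^ a := by
      rw [← pow_add, ← pow_mul, ← Nat.mul_succ, mul_comm,
        show (Fintype.card F - 2).succ = Fintype.card F - 1 by omega]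
    _ = 1 := by rw [hone, one_pow]

/-- Raising `χ x` to the power `conjExponent F r i` conjugates it for `i` in the second copy of
`Fin r` and leaves it unchanged for `i` in the first. -/
def conjExponent (F : Type*) [Fintype F] (r : ℕ) : Fin r ⊕ Fin r → ℕ :=
  Sum.elim (fun _ => 1) fun _ => Fintype.card F - 2

variable {χ : MulChar F ℂ} {a : ℕ} {A : F → F} {r : ℕ} {u : Fin r ⊕ Fin r → F}

lemma prod_mul_prod_conj_eq_prod_pow (hF : 2 < Fintype.card F) (χ : MulChar F ℂ) (a b : ℕ)
    (A : F → F) (u : Fin r ⊕ Fin r → F) (s : F) :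
    (∏ i, χ (s + u (.inl i)) ^ a * χ (s + A (u (.inl i))) ^ b) *
        ∏ i, conj (χ (s + u (.inr i)) ^ a * χ (s + A (u (.inr i))) ^ b) =
      ∏ k : (Fin r ⊕ Fin r) ⊕ (Fin r ⊕ Fin r), χ (s + Sum.elim u (A ∘ u) k) ^
        Sum.elim (fun i => a * conjExponent F r i) (fun i => b * conjExponent F r i) k := by
  simp only [Fintype.prod_sum_type, conjExponent, Sum.elim_inl, Sum.elim_inr, Function.comp_apply,
    mul_one, prod_mul_distrib, map_mul, map_pow, conj_mulChar_apply hF, ← pow_mul,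
    mul_comm (Fintype.card F - 2)]
  ring

lemma norm_sum_prod_mul_prod_conj_le (hχ : χ ^ a ≠ 1) (b : ℕ) (hA : ∀ i, A (u i) ≠ u i)
    (hu : ¬ EveryEntryMatched A u) :
    ‖∑ s, (∏ i, χ (s + u (.inl i)) ^ a * χ (s + A (u (.inl i))) ^ b) *
        ∏ i, conj (χ (s + u (.inr i)) ^ a * χ (s + A (u (.inr i))) ^ b)‖ ≤
      (4 * r - 1) * √(Fintype.card F) := by
  simp only [EveryEntryMatched, not_forall, not_exists, not_and, not_or] at hu
  obtain ⟨i₀, hi₀⟩ := hu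
  have hcard : (Fintype.card ((Fin r ⊕ Fin r) ⊕ (Fin r ⊕ Fin r)) : ℝ) = 4 * r := by
    simp only [Fintype.card_sum, Fintype.card_fin, Nat.cast_add]
    ring
  simp only [prod_mul_prod_conj_eq_prod_pow (two_lt_card_of_mulChar_pow_ne_one hχ)]
  rw [← hcard]
  refine norm_sum_prod_mulChar_add_pow_le (k₀ := .inl i₀) ?_ ?_
  · rintro (i | i) hi
    · exact (hi₀ i fun h => hi (congrArg _ h)).1
    · rcases eq_or_ne i i₀ with rfl | hne
      · exact hA i
      · exact (hi₀ i hne).2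
  · rcases i₀ with i | i
    · simpa [conjExponent] using hχ
    · exact mulChar_pow_mul_card_sub_two_ne_one hχ

lemma norm_sum_prod_mul_prod_conj_le_card (hF : 2 < Fintype.card F) (χ : MulChar F ℂ) (a b : ℕ)
    (A : F → F) (u : Fin r ⊕ Fin r → F) :
    ‖∑ s, (∏ i, χ (s + u (.inl i)) ^ a * χ (s + A (u (.inl i))) ^ b) *
        ∏ i, conj (χ (s + u (.inr i)) ^ a * χ (s + A (u (.inr i))) ^ b)‖ ≤ Fintype.card F := by
  simp only [prod_mul_prod_conj_eq_prod_pow hF]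
  refine (norm_sum_le_of_le _ fun s _ => norm_prod_mulChar_pow_le_one χ _ _ _).trans ?_
  simp

theorem pow_sum_norm_sum_mulChar_le (hχ : χ ^ a ≠ 1) (b : ℕ) {S T : Finset F} (hS : S.Nonempty)
    (hT : T.Nonempty) (hA : ∀ y ∈ T, A y ≠ y) (hr : 1 ≤ r) :
    (∑ y ∈ T, ‖∑ s ∈ S, χ (s + y) ^ a * χ (s + A y) ^ b‖) ^ (2 * r) ≤ #S ^ (2 * r - 1) *
      (#T ^ (2 * r) * ((4 * r - 1) * √(Fintype.card F)) +
        (4 * r) ^ (2 * r) * #T ^ r * Fintype.card F) := by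
  classical
  have hF := two_lt_card_of_mulChar_pow_ne_one hχ
  have hr' : (1 : ℝ) ≤ r := by exact_mod_cast hr
  have hweil : 0 ≤ (4 * r - 1) * √(Fintype.card F : ℝ) :=
    mul_nonneg (by linarith) (Real.sqrt_nonneg _)
  have hterm : ∀ u ∈ Fintype.piFinset fun _ : Fin r ⊕ Fin r => T,
      ‖∑ s, (∏ i, χ (s + u (.inl i)) ^ a * χ (s + A (u (.inl i))) ^ b) *
        ∏ i, conj (χ (s + u (.inr i)) ^ a * χ (s + A (u (.inr i))) ^ b)‖ ≤
      (4 * r - 1) * √(Fintype.card F) +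
        if EveryEntryMatched A u then (Fintype.card F : ℝ) else 0 := by
    intro u hu
    split_ifs with hmatch
    · exact (norm_sum_prod_mul_prod_conj_le_card hF χ a b A u).trans (le_add_of_nonneg_left hweil)
    · rw [add_zero]
      exact norm_sum_prod_mul_prod_conj_le hχ b (fun i => hA _ (Fintype.mem_piFinset.1 hu i)) hmatch
  have hcard : Fintype.card (Fin r ⊕ Fin r) = 2 * r := by simp [two_mul]
  have hmatched : (#{u ∈ Fintype.piFinset fun _ : Fin r ⊕ Fin r => T | EveryEntryMatched A u} : ℝ) ≤
      (4 * r) ^ (2 * r) * #T ^ r := by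
    have hle := card_filter_everyEntryMatched_le (ι := Fin r ⊕ Fin r) hT A
    rw [hcard, Nat.mul_div_cancel_left r two_pos, ← mul_assoc] at hle
    exact_mod_cast hle
  refine (pow_sum_norm_sum_le hS T (fun y s => χ (s + y) ^ a * χ (s + A y) ^ b) hr).trans ?_
  gcongr
  refine (sum_le_sum hterm).trans ?_
  rw [sum_add_distrib, ← sum_filter, sum_const, sum_const, nsmul_eq_mul, nsmul_eq_mul,
    Fintype.card_piFinset, prod_const, card_univ, hcard, Nat.cast_pow]
  gcongr

section Thresholds

variable {q t : ℝ}

lemma two_mul_pow_mul_le_pow (hr : r ≠ 0) (hq : 0 ≤ q) (ht : (2 * r) ^ 4 * q ^ (1 / (r : ℝ)) ≤ t) :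
    (2 * r) ^ (4 * r) * q ≤ t ^ r := by
  calc (2 * r) ^ (4 * r) * q = ((2 * r) ^ 4 * q ^ (1 / (r : ℝ))) ^ r := by
        rw [mul_pow _ (q ^ _), ← pow_mul, one_div, Real.rpow_inv_natCast_pow hq hr]
    _ ≤ t ^ r := by gcongr

lemma four_mul_pow_mul_pow_mul_le_pow (hr : 1 ≤ r) (hq : 0 ≤ q) (ht₀ : 0 ≤ t)
    (ht : (2 * r) ^ 4 * q ^ (1 / (r : ℝ)) ≤ t) :
    (4 * r) ^ (2 * r) * t ^ r * q ≤ t ^ (2 * r) := by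
  have hr' : (1 : ℝ) ≤ r := by exact_mod_cast hr
  calc (4 * r) ^ (2 * r) * t ^ r * q ≤ ((2 * r) ^ 2) ^ (2 * r) * t ^ r * q := by
        gcongr
        nlinarith
    _ = ((2 * r) ^ (4 * r) * q) * t ^ r := by
        rw [← pow_mul, show 2 * (2 * r) = 4 * r by ring]
        ring
    _ ≤ t ^ r * t ^ r := by
        gcongr
        exact two_mul_pow_mul_le_pow (by omega) hq ht
    _ = t ^ (2 * r) := by rw [← pow_add, two_mul]

lemma moment_bound_lt_pow_mul_sqrt (hr : 1 ≤ r) (hq : 1 < q)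
    (ht : (2 * r) ^ 4 * q ^ (1 / (r : ℝ)) ≤ t) :
    t ^ (2 * r) * ((4 * r - 1) * √q) + (4 * r) ^ (2 * r) * t ^ r * q <
      t ^ (2 * r) * (4 * r * √q) := by
  have ht₀ : 0 < t := lt_of_lt_of_le (by positivity) ht
  have hmatched := four_mul_pow_mul_pow_mul_le_pow hr (by linarith) ht₀.le ht
  calc _ ≤ t ^ (2 * r) * ((4 * r - 1) * √q) + t ^ (2 * r) * 1 := by rw [mul_one]; gcongr
    _ < t ^ (2 * r) * ((4 * r - 1) * √q) + t ^ (2 * r) * √q := by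
        gcongr
        exact Real.lt_sqrt_of_sq_lt (by simpa using hq)
    _ = t ^ (2 * r) * (4 * r * √q) := by ring

end Thresholds

theorem stmt_12_general (hχ : χ ^ a ≠ 1) (b : ℕ) {S T : Finset F} (hA : ∀ y ∈ T, A y ≠ y)
    (hr : 1 ≤ r) {η : ℝ} (hη : 0 < η)
    (hTcard : (2 * (r : ℝ)) ^ 4 * (Fintype.card F : ℝ) ^ (1 / (r : ℝ)) ≤ #T)
    (hScard : 4 * (r : ℝ) * (Fintype.card F : ℝ) ^ ((1 : ℝ) / 2) / η ^ (2 * r) ≤ #S) :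
    ∑ y ∈ T, ‖∑ s ∈ S, χ (s + y) ^ a * χ (s + A y) ^ b‖ < η * #T * #S := by
  have hq : (1 : ℝ) < Fintype.card F := by exact_mod_cast Fintype.one_lt_card
  have hTpos : (0 : ℝ) < #T := lt_of_lt_of_le (by positivity) hTcard
  have hSpos : (0 : ℝ) < #S := lt_of_lt_of_le (by positivity) hScard
  have hSη : 4 * r * √(Fintype.card F) ≤ #S * η ^ (2 * r) := by
    rwa [Real.sqrt_eq_rpow, ← div_le_iff₀ (by positivity)]
  refine lt_of_pow_lt_pow_left₀ (2 * r) (by positivity) ?_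
  calc (∑ y ∈ T, ‖∑ s ∈ S, χ (s + y) ^ a * χ (s + A y) ^ b‖) ^ (2 * r)
      ≤ #S ^ (2 * r - 1) * (#T ^ (2 * r) * ((4 * r - 1) * √(Fintype.card F)) +
          (4 * r) ^ (2 * r) * #T ^ r * Fintype.card F) :=
        pow_sum_norm_sum_mulChar_le hχ b (card_pos.1 (by exact_mod_cast hSpos))
          (card_pos.1 (by exact_mod_cast hTpos)) hA hr
    _ < #S ^ (2 * r - 1) * (#T ^ (2 * r) * (4 * r * √(Fintype.card F))) := by
        gcongr
        exact moment_bound_lt_pow_mul_sqrt hr hq hTcard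
    _ ≤ #S ^ (2 * r - 1) * (#T ^ (2 * r) * (#S * η ^ (2 * r))) := by gcongr
    _ = #S ^ (2 * r - 1 + 1) * #T ^ (2 * r) * η ^ (2 * r) := by ring
    _ = (η * #T * #S) ^ (2 * r) := by
        rw [Nat.sub_add_cancel (by omega)]
        ring

end CharacterCorrelations

/-- Under the hypotheses of the parameterized double character sum theorem,
for any η with 0 < η ≤ 1, the bound ∑_{y∈T} |∑_{s∈S} χ_a(s+y)·χ_b(s+A(y))| < η·|T|·|S|
holds whenever |T| ≥ (2r)⁴·q^{1/r} and |S| ≥ 4r·q^{1/2}/η^{2r}. -/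
theorem stmt_12 {F : Type*} [Field F] [Fintype F]
    (χ : MulChar F ℂ) (hord : orderOf χ = Fintype.card F - 1)
    (a b : ℕ) (ha : 0 < a) (ha' : a < Fintype.card F - 1) (hb : b < Fintype.card F - 1)
    (S T : Finset F) (hS : S.Nonempty) (hT : T.Nonempty)
    (A : F → F) (hA : ∀ y, A y ≠ y) (r : ℕ) (hr : 1 ≤ r)
    (η : ℝ) (hη : 0 < η) (hη1 : η ≤ 1)
    (hTcard : (2 * (r : ℝ)) ^ 4 * (Fintype.card F : ℝ) ^ (1 / (r : ℝ)) ≤ (T.card : ℝ))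
    (hScard : 4 * (r : ℝ) * (Fintype.card F : ℝ) ^ ((1 : ℝ)/2) / η ^ (2 * r) ≤
      (S.card : ℝ)) :
    ∑ y ∈ T, ‖∑ s ∈ S, (χ (s + y)) ^ a * (χ (s + A y)) ^ b‖ <
      η * (T.card : ℝ) * (S.card : ℝ) := by
  have hχ : χ ^ a ≠ 1 := pow_ne_one_of_lt_orderOf ha.ne' (by rwa [hord])
  exact stmt_12_general hχ b (fun y _ => hA y) hr hη hTcard hScard
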